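/- arXiv:1908.04667 — 9 statements merged into one kernel-verified Lean document; each statement's English description precedes it below -/
import Mathlib

section
/- Let n ≥ 1, let β₁ < β₂ < ... < βₙ be real numbers and let x₁ < x₂ < ... < xₙ be real numbers. Then the n×n matrix whose (i,j) entry is exp(βⱼ·xᵢ) has strictly positive determinant. -/
/-!
A nonzero exponential sum `∑ⱼ cⱼ exp (βⱼ t)` with `n` distinct exponents has fewer than `n` zeros:
multiplying by `exp (-β₀ t)` makes one exponent zero, so differentiating removes a term, while by
Rolle's theorem it costs at most one zero. Hence the matrix `exp (βⱼ xᵢ)` is invertible as soon as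
the `βⱼ` are distinct and the `xᵢ` are distinct. The strictly increasing `β` form a convex set, on
which the determinant is thus continuous and nowhere zero, hence of constant sign; at
`β = (0, 1, …, n - 1)` it is the Vandermonde determinant of the increasing sequence `exp xᵢ`.
-/

open Function Matrix

theorem convex_setOf_strictMono {𝕜 ι E : Type*} [Semiring 𝕜] [PartialOrder 𝕜] [Preorder ι]
    [AddCommMonoid E] [PartialOrder E] [IsOrderedCancelAddMonoid E] [Module 𝕜 E]
    [PosSMulStrictMono 𝕜 E] : Convex 𝕜 {f : ι → E | StrictMono f} :=
  convex_iff_forall_pos.2 fun _ hf _ hg _ _ ha hb _ => (hf.const_smul ha).add (hg.const_smul hb)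

theorem det_vandermonde_pos {R : Type*} [CommRing R] [PartialOrder R] [IsStrictOrderedRing R]
    {n : ℕ} {v : Fin n → R} (hv : StrictMono v) : 0 < (vandermonde v).det := by
  rw [det_vandermonde]
  exact Finset.prod_pos fun i _ => Finset.prod_pos fun j hj =>
    sub_pos.2 (hv (Finset.mem_Ioi.1 hj))

theorem exists_strictMono_deriv_eq_zero {n : ℕ} {f : ℝ → ℝ} {x : Fin (n + 1) → ℝ}
    (hx : StrictMono x) (hf : ContinuousOn f (Set.Icc (x 0) (x (Fin.last n))))
    (hfx : ∀ i : Fin n, f (x i.castSucc) = f (x i.succ)) :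
    ∃ y : Fin n → ℝ, StrictMono y ∧ ∀ i, deriv f (y i) = 0 := by
  have rolle (i : Fin n) : ∃ y ∈ Set.Ioo (x i.castSucc) (x i.succ), deriv f y = 0 :=
    exists_deriv_eq_zero (hx i.castSucc_lt_succ)
      (hf.mono (Set.Icc_subset_Icc (hx.monotone (Fin.zero_le _)) (hx.monotone (Fin.le_last _))))
      (hfx i)
  choose y hy hy' using rolle
  refine ⟨y, fun i j hij => ?_, hy'⟩
  calc
    y i < x i.succ := (hy i).2
    _ ≤ x j.castSucc := hx.monotone (Fin.succ_le_castSucc_iff.2 hij)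
    _ < y j := (hy j).1

section ExpSum

variable {ι : Type*} [Fintype ι]

/-- The exponential sum `t ↦ ∑ⱼ cⱼ exp (βⱼ t)` with exponents `β` and coefficients `c`, the generic
element of the span of the functions `t ↦ exp (βⱼ t)`. -/
noncomputable def expSum (β c : ι → ℝ) (t : ℝ) : ℝ :=
  ∑ j, c j * Real.exp (β j * t)

theorem expSum_sub_const (β c : ι → ℝ) (b t : ℝ) :
    expSum (fun j => β j - b) c t = Real.exp (-(b * t)) * expSum β c t := by
  simp only [expSum, Finset.mul_sum]
  refine Finset.sum_congr rfl fun j _ => ?_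
  rw [mul_left_comm, ← Real.exp_add]
  ring_nf

theorem hasDerivAt_expSum (β c : ι → ℝ) (t : ℝ) :
    HasDerivAt (expSum β c) (expSum β (fun j => β j * c j) t) t := by
  refine HasDerivAt.fun_sum fun j _ => ?_
  convert! (hasDerivAt_const_mul (β j)).exp.const_mul (c j) using 1
  ring

theorem expSum_succ {n : ℕ} (β c : Fin (n + 1) → ℝ) (t : ℝ) :
    expSum β c t = c 0 * Real.exp (β 0 * t) + expSum (Fin.tail β) (Fin.tail c) t :=
  Fin.sum_univ_succ _

theorem eq_zero_of_expSum_eq_zero {n : ℕ} {β c x : Fin n → ℝ} (hβ : Injective β)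
    (hx : Injective x) (h : ∀ i, expSum β c (x i) = 0) : c = 0 := by
  induction n with
  | zero => exact Subsingleton.elim _ _
  | succ n ih =>
    let γ j := β j - β 0
    have γ_injective : Injective γ := sub_left_injective.comp hβ
    have γ_zero : γ 0 = 0 := sub_self _
    have shifted_zero (i) : expSum γ c (x i) = 0 := by rw [expSum_sub_const, h, mul_zero]
    have sorted : StrictMono (x ∘ Tuple.sort x) :=
      (Tuple.monotone_sort x).strictMono_of_injective (hx.comp (Tuple.sort x).injective)
    obtain ⟨y, hy, deriv_zero⟩ := exists_strictMono_deriv_eq_zero (f := expSum γ c) sorted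
      (fun t _ => (hasDerivAt_expSum γ c t).continuousAt.continuousWithinAt)
      (fun i => by simp only [Function.comp_apply, shifted_zero])
    have tail_zero : Fin.tail (fun j => γ j * c j) = 0 := by
      refine ih (γ_injective.comp (Fin.succ_injective n)) hy.injective fun i => ?_
      have := deriv_zero i
      rwa [(hasDerivAt_expSum γ c (y i)).deriv, expSum_succ, γ_zero, zero_mul, zero_mul,
        zero_add] at this
    have c_succ (j : Fin n) : c j.succ = 0 := by
      have γ_succ_ne : γ j.succ ≠ 0 := γ_zero ▸ γ_injective.ne j.succ_ne_zero
      exact (mul_eq_zero.1 (congrFun tail_zero j)).resolve_left γ_succ_ne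
    have c_zero : c 0 = 0 := by
      simpa [expSum, Fin.sum_univ_succ, c_succ] using h 0
    exact funext (Fin.cases c_zero c_succ)

end ExpSum

/-- The matrix `exp (βⱼ xᵢ)` evaluating the exponential functions with exponents `β` at the points
`x`: a Vandermonde matrix with real exponents. Rows are indexed by points, columns by exponents. -/
noncomputable def expVandermonde {m n : Type*} (β : n → ℝ) (x : m → ℝ) : Matrix m n ℝ :=
  of fun i j => Real.exp (β j * x i)

theorem expVandermonde_mulVec {m n : Type*} [Fintype n] (β c : n → ℝ) (x : m → ℝ) :
    expVandermonde β x *ᵥ c = fun i => expSum β c (x i) :=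
  funext fun _ => Finset.sum_congr rfl fun _ _ => mul_comm _ _

theorem expVandermonde_natCast {n : ℕ} (x : Fin n → ℝ) :
    expVandermonde (fun j : Fin n => (j : ℝ)) x = vandermonde (Real.exp ∘ x) := by
  ext i j
  simp only [expVandermonde, of_apply, vandermonde_apply, Function.comp_apply, Real.exp_nat_mul]

theorem continuous_det_expVandermonde {n : Type*} [Fintype n] [DecidableEq n] (x : n → ℝ) :
    Continuous fun β : n → ℝ => (expVandermonde β x).det := by
  refine Continuous.matrix_det (continuous_matrix fun i j => ?_)
  simp only [expVandermonde, of_apply]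
  fun_prop

theorem det_expVandermonde_ne_zero {n : ℕ} {β x : Fin n → ℝ} (hβ : Injective β)
    (hx : Injective x) : (expVandermonde β x).det ≠ 0 := by
  intro hdet
  obtain ⟨c, c_ne, hc⟩ := exists_mulVec_eq_zero_iff.2 hdet
  rw [expVandermonde_mulVec] at hc
  exact c_ne (eq_zero_of_expSum_eq_zero hβ hx (congrFun hc))

/-- Generalized Vandermonde positivity: if `β₁ < ... < βₙ` and `x₁ < ... < xₙ`,
then the matrix with entries `exp (βⱼ * xᵢ)` has strictly positive determinant. -/
theorem exp_vandermonde_det_pos (n : ℕ) (hn : 1 ≤ n) (β x : Fin n → ℝ)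
    (hβ : StrictMono β) (hx : StrictMono x) :
    0 < (Matrix.of fun i j : Fin n => Real.exp (β j * x i)).det := by
  change 0 < (expVandermonde β x).det
  have natCast_strictMono : StrictMono fun j : Fin n => (j : ℝ) :=
    Nat.strictMono_cast.comp Fin.val_strictMono
  have det_natCast_pos : 0 < (expVandermonde (fun j : Fin n => (j : ℝ)) x).det := by
    rw [expVandermonde_natCast]
    exact det_vandermonde_pos (Real.exp_strictMono.comp hx)
  by_contra! det_nonpos
  obtain ⟨γ, hγ, det_zero⟩ :=
    (convex_setOf_strictMono (𝕜 := ℝ)).isPreconnected.intermediate_value hβ natCast_strictMono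
      (continuous_det_expVandermonde x).continuousOn ⟨det_nonpos, det_natCast_pos.le⟩
  exact det_expVandermonde_ne_zero hγ.injective hx.injective det_zero
end

section
/- Define the kernel K : (0,∞) × (0,∞) → ℝ by K(x,y) = y/x² if y ≤ x and K(x,y) = 0 otherwise. Then K is totally positive: for every m ≥ 1 and all points 0 < x₁ < x₂ < ... < xₘ and 0 < y₁ < y₂ < ... < yₘ, the m×m matrix with entries K(xᵢ, yⱼ) has nonnegative determinant. -/
/-!
The factors `1 / x²` and `y` scale the rows and columns of the matrix by nonnegative numbers, so
only the indicator `𝟙{y ≤ x}` matters. Its matrix is a staircase: row `i` has ones exactly in an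
initial segment of the columns, and these segments grow with `i`. If the determinant is nonzero, no
segment is empty and no two coincide. As there are only as many columns as rows, the `i`-th segment
must then end at column `i`, and the matrix is lower unitriangular.
-/

section Staircase

variable {ι : Type*} [LinearOrder ι]

theorem exists_eq_Iic_of_isLowerSet {s : Set ι} (hs : IsLowerSet s) (hfin : s.Finite)
    (hne : s.Nonempty) : ∃ a, s = Set.Iic a := by
  obtain ⟨a, ha, hmax⟩ := s.exists_max_image id hfin hne
  exact ⟨a, Set.Subset.antisymm hmax (hs.Iic_subset ha)⟩

variable [Fintype ι] {R : Type*} [CommRing R]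

theorem det_indicator_le_eq_one :
    (Matrix.of fun i j : ι => if j ≤ i then (1 : R) else 0).det = 1 := by
  rw [Matrix.det_of_isLowerTriangular]
  · simp
  · intro i j (hij : i < j)
    simp [hij]

theorem det_indicator_le_apply_eq_zero_or_one {f : ι → ι} (hf : Monotone f) :
    (Matrix.of fun i j => if j ≤ f i then (1 : R) else 0).det = 0 ∨
      (Matrix.of fun i j => if j ≤ f i then (1 : R) else 0).det = 1 := by
  by_cases hinj : Function.Injective f
  · right
    obtain rfl : f = id := (hf.strictMono_of_injective hinj).eq_id
    exact det_indicator_le_eq_one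
  · left
    obtain ⟨i, k, hfik, hik⟩ := Function.not_injective_iff.mp hinj
    exact Matrix.det_zero_of_row_eq hik (by ext j; simp [hfik])

theorem det_indicator_le_eq_zero_or_one {α : Type*} [Preorder α] [DecidableLE α] {x y : ι → α}
    (hx : Monotone x) (hy : Monotone y) :
    (Matrix.of fun i j => if y j ≤ x i then (1 : R) else 0).det = 0 ∨
      (Matrix.of fun i j => if y j ≤ x i then (1 : R) else 0).det = 1 := by
  by_cases hrow : ∀ i, {j | y j ≤ x i}.Nonempty
  · have hlower (i : ι) : IsLowerSet {j | y j ≤ x i} := fun _ _ hle hj => (hy hle).trans hj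
    choose f hf using fun i =>
      exists_eq_Iic_of_isLowerSet (hlower i) (Set.toFinite _) (hrow i)
    have hle_iff (i j : ι) : y j ≤ x i ↔ j ≤ f i := Set.ext_iff.mp (hf i) j
    have hf_mono : Monotone f := fun i k hik =>
      (hle_iff k _).mp (((hle_iff i _).mpr le_rfl).trans (hx hik))
    simpa only [hle_iff] using det_indicator_le_apply_eq_zero_or_one hf_mono
  · left
    obtain ⟨i, hi⟩ := not_forall.mp hrow
    exact Matrix.det_eq_zero_of_row_eq_zero i fun j => if_neg fun hj => hi ⟨j, hj⟩

end Staircase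

section TotalPositivity

variable {α β R : Type*} [CommRing R] [PartialOrder R]

/-- Total positivity of a kernel `K` on `s × t`: every matrix `K (x i) (y j)` at increasing points
of `s` and `t` has nonnegative determinant. Restricting to subsets, rather than to subtypes, lets
`K` be given by a formula on all of `α × β`. -/
def IsTotallyPositiveOn [Preorder α] [Preorder β] (K : α → β → R) (s : Set α) (t : Set β) : Prop :=
  ∀ (m : ℕ) (x : Fin m → α) (y : Fin m → β), StrictMono x → StrictMono y →
    (∀ i, x i ∈ s) → (∀ j, y j ∈ t) → 0 ≤ (Matrix.of fun i j => K (x i) (y j)).det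

theorem isTotallyPositiveOn_indicator_le [ZeroLEOneClass R] [Preorder α] [DecidableLE α]
    (s t : Set α) : IsTotallyPositiveOn (fun x y => if y ≤ x then (1 : R) else 0) s t := by
  intro m x y hx hy _ _
  rcases det_indicator_le_eq_zero_or_one (R := R) hx.monotone hy.monotone with h | h
  · exact h.ge
  · exact zero_le_one.trans_eq h.symm

theorem IsTotallyPositiveOn.mul_mul [IsOrderedRing R] [Preorder α] [Preorder β] {K : α → β → R}
    {s : Set α} {t : Set β} (hK : IsTotallyPositiveOn K s t) {f : α → R} {g : β → R}
    (hf : ∀ x ∈ s, 0 ≤ f x) (hg : ∀ y ∈ t, 0 ≤ g y) :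
    IsTotallyPositiveOn (fun x y => f x * (g y * K x y)) s t := by
  intro m x y hx hy hxs hyt
  have hdet : (Matrix.of fun i j => f (x i) * (g (y j) * K (x i) (y j))).det =
      (∏ i, f (x i)) * ((∏ j, g (y j)) * (Matrix.of fun i j => K (x i) (y j)).det) := by
    rw [← Matrix.det_mul_row, ← Matrix.det_mul_column]
    rfl
  rw [hdet]
  exact mul_nonneg (Finset.prod_nonneg fun i _ => hf _ (hxs i))
    (mul_nonneg (Finset.prod_nonneg fun j _ => hg _ (hyt j)) (hK m x y hx hy hxs hyt))

end TotalPositivity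

/-- The kernel `K(x,y) = (y/x²)·𝟙{y ≤ x}` is totally positive on `(0,∞) × (0,∞)`. -/
theorem kernel_totally_positive (m : ℕ) (hm : 1 ≤ m) (x y : Fin m → ℝ)
    (hx : StrictMono x) (hy : StrictMono y)
    (hx0 : ∀ i, 0 < x i) (hy0 : ∀ j, 0 < y j) :
    0 ≤ (Matrix.of fun i j : Fin m =>
      if y j ≤ x i then y j / (x i) ^ 2 else 0).det := by
  have hK : IsTotallyPositiveOn
      (fun x y : ℝ => (x ^ 2)⁻¹ * (y * if y ≤ x then 1 else 0)) (Set.Ioi 0) (Set.Ioi 0) :=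
    (isTotallyPositiveOn_indicator_le _ _).mul_mul
      (fun x _ => inv_nonneg.mpr (sq_nonneg x)) (fun _ hy => le_of_lt hy)
  have hfactor (x y : ℝ) :
      (if y ≤ x then y / x ^ 2 else 0) = (x ^ 2)⁻¹ * (y * if y ≤ x then 1 else 0) := by
    rw [mul_ite, mul_ite, mul_one, mul_zero, mul_zero, div_eq_inv_mul]
  simpa only [hfactor] using hK m x y hx hy hx0 hy0
end

section
/- Let l : (0,∞) → ℝ be continuous and bounded, and define m(x) := x⁻² ∫₀ˣ y·l(y) dy for x > 0. Suppose there exist points 0 < x₁ < x₂ < ... < x_k and a sign ε ∈ {−1, 1} such that ε·(−1)^i·m(xᵢ) > 0 for every i = 1, ..., k (i.e., m takes nonzero values of alternating sign at the xᵢ, starting with sign ε·(−1)). Then there exist points 0 < y₁ < y₂ < ... < y_k such that ε·(−1)^i·l(yᵢ) > 0 for every i = 1, ..., k. -/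
open MeasureTheory intervalIntegral

/-!
The kernel factors as `c x * w y` on `y ≤ x`, so the image of `l` has the sign of the primitive
`x ↦ ∫ t in a..x, w t * l t`, which vanishes at `a`. If this primitive alternates in sign along
`x₁ < x₂ < ⋯`, its increment over each of the consecutive intervals `(a, x₁], (x₁, x₂], …` has the
sign of its value at the right endpoint. As `w` is nonnegative, `l` must take that sign somewhere
in the interval, and points chosen in consecutive intervals are increasing.
-/

lemma exists_mem_Ioc_pos_of_integral_mul_pos {μ : Measure ℝ} {w f : ℝ → ℝ} {a b : ℝ}
    (hab : a ≤ b) (hw : ∀ t ∈ Set.Ioc a b, 0 ≤ w t) (hpos : 0 < ∫ t in a..b, w t * f t ∂μ) :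
    ∃ t ∈ Set.Ioc a b, 0 < f t := by
  contrapose! hpos
  rw [integral_of_le hab]
  exact setIntegral_nonpos measurableSet_Ioc fun t ht ↦
    mul_nonpos_of_nonneg_of_nonpos (hw t ht) (hpos t ht)

lemma strictMono_of_mem_Ioc_castSucc_succ {α : Type*} [Preorder α] {k : ℕ}
    {p : Fin (k + 1) → α} {y : Fin k → α}
    (hy : ∀ i : Fin k, y i ∈ Set.Ioc (p i.castSucc) (p i.succ)) : StrictMono y := by
  have hp : StrictMono p := Fin.strictMono_iff_lt_succ.2 fun i ↦ (hy i).1.trans_le (hy i).2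
  intro i j hij
  calc
    y i ≤ p i.succ := (hy i).2
    _ ≤ p j.castSucc := hp.monotone (Fin.succ_le_castSucc_iff.2 hij)
    _ < y j := (hy j).1

lemma neg_one_pow_mul_sub_pos_of_alternating {R : Type*} [CommRing R] [LinearOrder R]
    [IsStrictOrderedRing R] {k : ℕ} {ε : R} {F : Fin (k + 1) → R} (hF₀ : F 0 = 0)
    (hF : ∀ i : Fin k, 0 < ε * (-1) ^ ((i : ℕ) + 1) * F i.succ) (i : Fin k) :
    0 < ε * (-1) ^ ((i : ℕ) + 1) * (F i.succ - F i.castSucc) := by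
  suffices hprev : ε * (-1) ^ ((i : ℕ) + 1) * F i.castSucc ≤ 0 by
    rw [mul_sub]
    exact sub_pos.2 (hprev.trans_lt (hF i))
  obtain ⟨_ | n, hn⟩ := i
  · exact (mul_eq_zero_of_right _ hF₀).le
  · have h : 0 < ε * (-1) ^ (n + 1) * F (Fin.castSucc ⟨n + 1, hn⟩) := hF ⟨n, by lia⟩
    rw [pow_succ]
    linarith

lemma intervalIntegrable_of_continuousOn_Ioc_of_norm_le {E : Type*} [NormedAddCommGroup E]
    {μ : Measure ℝ} [IsLocallyFiniteMeasure μ] {f : ℝ → E} {a b M : ℝ} (hab : a ≤ b)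
    (hf : ContinuousOn f (Set.Ioc a b)) (hM : ∀ t ∈ Set.Ioc a b, ‖f t‖ ≤ M) :
    IntervalIntegrable f μ a b :=
  (intervalIntegrable_iff_integrableOn_Ioc_of_le hab).2 <|
    IntegrableOn.of_bound measure_Ioc_lt_top (hf.aestronglyMeasurable measurableSet_Ioc) M <|
      ae_restrict_of_forall_mem measurableSet_Ioc hM

theorem variation_diminishing_general {μ : Measure ℝ} {a : ℝ} {c w l : ℝ → ℝ}
    (hc : ∀ t, a < t → 0 ≤ c t) (hw : ∀ t, a < t → 0 ≤ w t)
    {k : ℕ} {x : Fin k → ℝ} (hxa : ∀ i, a < x i) (hx : StrictMono x)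
    (hint : ∀ i, IntervalIntegrable (fun t ↦ w t * l t) μ a (x i)) {ε : ℝ}
    (hsign : ∀ i : Fin k,
      0 < ε * (-1) ^ ((i : ℕ) + 1) * (c (x i) * ∫ t in a..x i, w t * l t ∂μ)) :
    ∃ y : Fin k → ℝ, (∀ i, a < y i) ∧ StrictMono y ∧
      ∀ i : Fin k, 0 < ε * (-1) ^ ((i : ℕ) + 1) * l (y i) := by
  let p : Fin (k + 1) → ℝ := Fin.cons a x
  have hp : StrictMono p := Fin.strictMono_cons.2 ⟨hxa, hx⟩
  have hap (i) : a ≤ p i := hp.monotone (Fin.zero_le i)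
  have hintp (i) : IntervalIntegrable (fun t ↦ w t * l t) μ a (p i) :=
    Fin.cases IntervalIntegrable.refl hint i
  have hprim (i : Fin k) :
      0 < ε * (-1) ^ ((i : ℕ) + 1) * ∫ t in a..p i.succ, w t * l t ∂μ :=
    pos_of_mul_pos_right (by rw [mul_left_comm]; exact hsign i) (hc _ (hxa i))
  have hincr (i : Fin k) : 0 < ∫ t in p i.castSucc..p i.succ,
      w t * (ε * (-1) ^ ((i : ℕ) + 1) * l t) ∂μ := by
    simp only [mul_left_comm (w _), intervalIntegral.integral_const_mul]
    rw [← integral_interval_sub_left (hintp _) (hintp _)]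
    exact neg_one_pow_mul_sub_pos_of_alternating
      (F := fun j ↦ ∫ t in a..p j, w t * l t ∂μ) integral_same hprim i
  choose y hy hly using fun i : Fin k ↦ exists_mem_Ioc_pos_of_integral_mul_pos
    (hp.monotone i.castSucc_le_succ) (fun t ht ↦ hw t ((hap _).trans_lt ht.1)) (hincr i)
  exact ⟨y, fun i ↦ (hap _).trans_lt (hy i).1, strictMono_of_mem_Ioc_castSucc_succ hy, hly⟩

/-- Variation-diminishing property: every alternating sign pattern of
`m(x) = x⁻² ∫₀ˣ y l(y) dy` at increasing positive points is also exhibited,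
with the same signs, by `l` at some increasing positive points. -/
theorem variation_diminishing (l : ℝ → ℝ)
    (hcont : ContinuousOn l (Set.Ioi (0 : ℝ)))
    (hbdd : ∃ M : ℝ, ∀ x : ℝ, 0 < x → |l x| ≤ M)
    (k : ℕ) (x : Fin k → ℝ) (hx0 : ∀ i, 0 < x i) (hx : StrictMono x)
    (ε : ℝ) (hε : ε = 1 ∨ ε = -1)
    (hsign : ∀ i : Fin k,
      0 < ε * (-1 : ℝ) ^ ((i : ℕ) + 1) *
        (((x i) ^ 2)⁻¹ * ∫ t in (0 : ℝ)..(x i), t * l t)) :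
    ∃ y : Fin k → ℝ, (∀ i, 0 < y i) ∧ StrictMono y ∧
      ∀ i : Fin k, 0 < ε * (-1 : ℝ) ^ ((i : ℕ) + 1) * l (y i) := by
  obtain ⟨M, hM⟩ := hbdd
  have hint (i : Fin k) : IntervalIntegrable (fun t ↦ t * l t) volume 0 (x i) :=
    (intervalIntegrable_of_continuousOn_Ioc_of_norm_le (hx0 i).le
      (hcont.mono Set.Ioc_subset_Ioi_self) fun t ht ↦ hM t ht.1).continuousOn_mul continuousOn_id
  exact variation_diminishing_general (c := fun t ↦ (t ^ 2)⁻¹) (fun t _ ↦ by positivity)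
    (fun t ht ↦ ht.le) hx0 hx hint hsign
end

section
/- Let λ > 0, κ > 0, σ > 0 and θ, z ∈ ℝ, and define l : [0,∞) → ℝ by l(x) = (σ²κ²/λ)·e^{−2λx} + (κλ(θ − z) − σ²κ²/λ)·e^{−λx}. Then: (i) if z ≤ θ − σ²κ/λ², then l(x) > 0 for all x ≥ 0; (ii) if z ≥ θ, then l(0) ≤ 0 and l(x) < 0 for all x > 0; (iii) if θ − σ²κ/λ² < z < θ, then there exists a unique x* > 0 such that l(x) > 0 for 0 ≤ x < x*, l(x*) = 0, and l(x) < 0 for x > x*. -/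
/-!
With `a = σ²κ²/λ` and `b = κλ(θ - z)`, the slope factors as
`l x = exp (-λx) * (b - a * (1 - exp (-λx)))`, so its sign is decided by comparing `b` with
`a * (1 - exp (-λx))`, which increases strictly from `0` at `x = 0` towards its supremum `a`.
The three shapes are therefore `a ≤ b`, `b ≤ 0` and `0 < b < a`, and in the last case the sign
changes where `exp (-λx) = 1 - b / a`.
-/

/-- The exponential saturation curve with rate `lam` and limiting level `a`, which the initial
slope of the forward curve is compared with. -/
noncomputable def expSaturation (lam a x : ℝ) : ℝ :=
  a * (1 - Real.exp (-(lam * x)))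

/-- The derivative of the Vasicek forward curve at maturity `x`, in terms of `a = σ²κ²/λ` and of
its value `b = κλ(θ - z)` at `x = 0`. -/
noncomputable def forwardSlope (lam a b x : ℝ) : ℝ :=
  a * Real.exp (-(2 * lam * x)) + (b - a) * Real.exp (-(lam * x))

/-- The maturity at which `expSaturation lam a` attains the level `b`, hence the location of the
maximum of a humped forward curve. Since `Real.log` and `/` have junk values, it has
this meaning only for `b / a < 1`, `a ≠ 0` and `lam ≠ 0`. -/
noncomputable def humpMaturity (lam a b : ℝ) : ℝ :=
  -Real.log (1 - b / a) / lam

section Saturation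

variable {lam a b : ℝ}

theorem expSaturation_zero (lam a : ℝ) : expSaturation lam a 0 = 0 := by
  simp [expSaturation]

theorem expSaturation_lt (lam : ℝ) (ha : 0 < a) (x : ℝ) : expSaturation lam a x < a :=
  mul_lt_of_lt_one_right ha (sub_lt_self 1 (Real.exp_pos _))

theorem expSaturation_strictMono (hlam : 0 < lam) (ha : 0 < a) :
    StrictMono (expSaturation lam a) := by
  intro x y hxy
  unfold expSaturation
  gcongr

theorem expSaturation_humpMaturity (hlam : lam ≠ 0) (ha : a ≠ 0) (hba : b / a < 1) :
    expSaturation lam a (humpMaturity lam a b) = b := by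
  have hexponent : -(lam * humpMaturity lam a b) = Real.log (1 - b / a) := by
    rw [humpMaturity, mul_div_cancel₀ _ hlam, neg_neg]
  rw [expSaturation, hexponent, Real.exp_log (sub_pos.2 hba), sub_sub_cancel,
    mul_div_cancel₀ _ ha]

theorem humpMaturity_pos (hlam : 0 < lam) (hb : 0 < b) (hba : b < a) :
    0 < humpMaturity lam a b := by
  have ha : 0 < a := hb.trans hba
  rwa [← (expSaturation_strictMono hlam ha).lt_iff_lt, expSaturation_zero,
    expSaturation_humpMaturity hlam.ne' ha.ne' ((div_lt_one ha).2 hba)]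

end Saturation

section Slope

theorem forwardSlope_eq_exp_mul (lam a b x : ℝ) :
    forwardSlope lam a b x = Real.exp (-(lam * x)) * (b - expSaturation lam a x) := by
  have hsq : Real.exp (-(2 * lam * x)) = Real.exp (-(lam * x)) ^ 2 := by
    rw [← Real.exp_nat_mul]
    ring_nf
  rw [forwardSlope, expSaturation, hsq]
  ring

theorem forwardSlope_zero (lam a b : ℝ) : forwardSlope lam a b 0 = b := by
  simp [forwardSlope]

variable {lam a b x : ℝ}

theorem forwardSlope_pos_iff : 0 < forwardSlope lam a b x ↔ expSaturation lam a x < b := by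
  rw [forwardSlope_eq_exp_mul, mul_pos_iff_of_pos_left (Real.exp_pos _), sub_pos]

theorem forwardSlope_neg_iff : forwardSlope lam a b x < 0 ↔ b < expSaturation lam a x := by
  rw [forwardSlope_eq_exp_mul, ← smul_eq_mul,
    smul_neg_iff_of_pos_left (Real.exp_pos _), sub_neg]

theorem forwardSlope_eq_zero_iff : forwardSlope lam a b x = 0 ↔ expSaturation lam a x = b := by
  rw [forwardSlope_eq_exp_mul, mul_eq_zero_iff_left (Real.exp_ne_zero _), sub_eq_zero, eq_comm]

theorem forwardSlope_pos_of_le (ha : 0 < a) (hab : a ≤ b) : 0 < forwardSlope lam a b x :=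
  forwardSlope_pos_iff.2 ((expSaturation_lt lam ha x).trans_le hab)

theorem forwardSlope_neg_of_nonpos (hlam : 0 < lam) (ha : 0 < a) (hb : b ≤ 0) (hx : 0 < x) :
    forwardSlope lam a b x < 0 := by
  have hsat : 0 < expSaturation lam a x :=
    (expSaturation_zero lam a).symm.trans_lt (expSaturation_strictMono hlam ha hx)
  exact forwardSlope_neg_iff.2 (hb.trans_lt hsat)

theorem forwardSlope_pos_iff_lt_humpMaturity (hlam : 0 < lam) (ha : 0 < a) (hba : b < a) :
    0 < forwardSlope lam a b x ↔ x < humpMaturity lam a b := by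
  rw [forwardSlope_pos_iff, ← (expSaturation_strictMono hlam ha).lt_iff_lt (a := x),
    expSaturation_humpMaturity hlam.ne' ha.ne' ((div_lt_one ha).2 hba)]

theorem forwardSlope_neg_iff_humpMaturity_lt (hlam : 0 < lam) (ha : 0 < a) (hba : b < a) :
    forwardSlope lam a b x < 0 ↔ humpMaturity lam a b < x := by
  rw [forwardSlope_neg_iff, ← (expSaturation_strictMono hlam ha).lt_iff_lt (b := x),
    expSaturation_humpMaturity hlam.ne' ha.ne' ((div_lt_one ha).2 hba)]

theorem forwardSlope_eq_zero_iff_eq_humpMaturity (hlam : 0 < lam) (ha : 0 < a) (hba : b < a) :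
    forwardSlope lam a b x = 0 ↔ x = humpMaturity lam a b := by
  rw [forwardSlope_eq_zero_iff, ← (expSaturation_strictMono hlam ha).injective.eq_iff (a := x),
    expSaturation_humpMaturity hlam.ne' ha.ne' ((div_lt_one ha).2 hba)]

end Slope

theorem sq_mul_sq_div_le_mul_sub_iff {lam kap : ℝ} (hlam : 0 < lam) (hkap : 0 < kap)
    (sig th z : ℝ) :
    sig ^ 2 * kap ^ 2 / lam ≤ kap * lam * (th - z) ↔ z ≤ th - sig ^ 2 * kap / lam ^ 2 := by
  have hfactor : sig ^ 2 * kap ^ 2 / lam = kap * lam * (sig ^ 2 * kap / lam ^ 2) := by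
    field_simp
  rw [hfactor, mul_le_mul_iff_right₀ (mul_pos hkap hlam), le_sub_comm]

/-- Classification of forward-curve shapes in the one-factor Vasicek model:
normal, inverse and humped, according to the position of the state `z`. -/
theorem vasicek_forward_shapes (lam kap sig th z : ℝ)
    (hlam : 0 < lam) (hkap : 0 < kap) (hsig : 0 < sig)
    (l : ℝ → ℝ)
    (hl : ∀ x : ℝ, l x = sig ^ 2 * kap ^ 2 / lam * Real.exp (-(2 * lam * x)) +
        (kap * lam * (th - z) - sig ^ 2 * kap ^ 2 / lam) * Real.exp (-(lam * x))) :
    (z ≤ th - sig ^ 2 * kap / lam ^ 2 → ∀ x : ℝ, 0 ≤ x → 0 < l x) ∧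
    (th ≤ z → l 0 ≤ 0 ∧ ∀ x : ℝ, 0 < x → l x < 0) ∧
    (th - sig ^ 2 * kap / lam ^ 2 < z → z < th →
      ∃! xs : ℝ, 0 < xs ∧ (∀ x : ℝ, 0 ≤ x → x < xs → 0 < l x) ∧ l xs = 0 ∧
        ∀ x : ℝ, xs < x → l x < 0) := by
  set a := sig ^ 2 * kap ^ 2 / lam
  set b := kap * lam * (th - z)
  obtain rfl : l = forwardSlope lam a b := funext hl
  have ha : 0 < a := by positivity
  have hnormal : a ≤ b ↔ z ≤ th - sig ^ 2 * kap / lam ^ 2 :=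
    sq_mul_sq_div_le_mul_sub_iff hlam hkap sig th z
  refine ⟨fun hz x _ => forwardSlope_pos_of_le ha (hnormal.2 hz), fun hz => ?inverse,
    fun hz hzth => ?humped⟩
  case inverse =>
    have hb : b ≤ 0 := mul_nonpos_of_nonneg_of_nonpos (by positivity) (sub_nonpos.2 hz)
    exact ⟨(forwardSlope_zero lam a b).trans_le hb,
      fun x hx => forwardSlope_neg_of_nonpos hlam ha hb hx⟩
  case humped =>
    have hb : 0 < b := mul_pos (by positivity) (sub_pos.2 hzth)
    have hba : b < a := not_le.1 (mt hnormal.1 hz.not_ge)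
    exact ⟨humpMaturity lam a b,
      ⟨humpMaturity_pos hlam hb hba,
        fun x _ hx => (forwardSlope_pos_iff_lt_humpMaturity hlam ha hba).2 hx,
        (forwardSlope_eq_zero_iff_eq_humpMaturity hlam ha hba).2 rfl,
        fun x hx => (forwardSlope_neg_iff_humpMaturity_lt hlam ha hba).2 hx⟩,
      fun y hy => (forwardSlope_eq_zero_iff_eq_humpMaturity hlam ha hba).1 hy.2.2.1⟩
end

section
/- Let λ > 0, κ > 0, σ > 0 and θ, z ∈ ℝ, let l(x) = (σ²κ²/λ)·e^{−2λx} + (κλ(θ − z) − σ²κ²/λ)·e^{−λx}, and define m(x) := x⁻² ∫₀ˣ y·l(y) dy for x > 0. Then: (i) if z ≤ θ − 3σ²κ/(4λ²), then m(x) > 0 for all x > 0; (ii) if z ≥ θ, then m(x) < 0 for all x > 0; (iii) if θ − 3σ²κ/(4λ²) < z < θ, then there exists a unique x* > 0 such that m(x) > 0 for 0 < x < x*, m(x*) = 0, and m(x) < 0 for x > x*. -/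
open MeasureTheory intervalIntegral

/-! Write `A = σ²κ²/λ` and `B = κλ(θ - z) - A`. Then `x l(x) = w(x) h(x)` with the positive weight
`w(x) = x e^{-λx}` and the strictly decreasing function `h(x) = A e^{-λx} + B`, so `m(x)` has the
sign of the `w`-weighted mean of `h` over `[0, x]`. Such a mean is itself strictly decreasing in
`x`. It decreases from `h(0) = A + B = κλ(θ - z)` to its limit at infinity, which by
`∫₀^∞ t e^{-ct} dt = c⁻²` equals `A/4 + B = κλ(θ - 3σ²κ/(4λ²) - z)`. The signs of these two limits
separate the three cases. -/

open Set Filter Topology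

/-- The mean of `h` over `[a, x]` with respect to the weight `w`. For `x = a` it is `0 / 0 = 0`. -/
noncomputable def weightedMean (w h : ℝ → ℝ) (a x : ℝ) : ℝ :=
  (∫ t in a..x, w t * h t) / ∫ t in a..x, w t

section WeightedIntegral

variable {w h : ℝ → ℝ} {b c : ℝ}

theorem integral_lt_integral_of_lt_on_Ioo {f g : ℝ → ℝ} (hbc : b < c)
    (hf : IntervalIntegrable f volume b c) (hg : IntervalIntegrable g volume b c)
    (hlt : ∀ t ∈ Ioo b c, f t < g t) : ∫ t in b..c, f t < ∫ t in b..c, g t := by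
  rw [← sub_pos, ← integral_sub hg hf]
  exact intervalIntegral_pos_of_pos_on (hg.sub hf) (fun t ht => sub_pos.2 (hlt t ht)) hbc

theorem integral_mul_lt_of_strictAntiOn (hbc : b < c) (hw : IntervalIntegrable w volume b c)
    (hpos : ∀ t ∈ Ioo b c, 0 < w t) (hcont : ContinuousOn h (Icc b c))
    (hanti : StrictAntiOn h (Icc b c)) :
    ∫ t in b..c, w t * h t < (∫ t in b..c, w t) * h b := by
  rw [← intervalIntegral.integral_mul_const]
  refine integral_lt_integral_of_lt_on_Ioo hbc
    (hw.mul_continuousOn (uIcc_of_le hbc.le ▸ hcont)) (hw.mul_const _) fun t ht => ?_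
  exact mul_lt_mul_of_pos_left
    (hanti (left_mem_Icc.2 hbc.le) (Ioo_subset_Icc_self ht) ht.1) (hpos t ht)

theorem lt_integral_mul_of_strictAntiOn (hbc : b < c) (hw : IntervalIntegrable w volume b c)
    (hpos : ∀ t ∈ Ioo b c, 0 < w t) (hcont : ContinuousOn h (Icc b c))
    (hanti : StrictAntiOn h (Icc b c)) :
    (∫ t in b..c, w t) * h c < ∫ t in b..c, w t * h t := by
  rw [← intervalIntegral.integral_mul_const]
  refine integral_lt_integral_of_lt_on_Ioo hbc (hw.mul_const _)
    (hw.mul_continuousOn (uIcc_of_le hbc.le ▸ hcont)) fun t ht => ?_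
  exact mul_lt_mul_of_pos_left
    (hanti (Ioo_subset_Icc_self ht) (right_mem_Icc.2 hbc.le) ht.2) (hpos t ht)

end WeightedIntegral

theorem continuousOn_integral_Ioi {E : Type*} [NormedAddCommGroup E] [NormedSpace ℝ E]
    {f : ℝ → E} {a : ℝ}
    (hf : ∀ x, a < x → IntervalIntegrable f volume a x) :
    ContinuousOn (fun x => ∫ t in a..x, f t) (Ioi a) := by
  intro x (hx : a < x)
  have hax : a < x + 1 := by linarith
  have hcont := continuousOn_primitive_interval' (hf (x + 1) hax) left_mem_uIcc
  rw [uIcc_of_le hax.le] at hcont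
  exact (hcont.continuousAt (Icc_mem_nhds hx (lt_add_one x))).continuousWithinAt

section WeightedMean

variable {w h : ℝ → ℝ} {a x : ℝ}

theorem integral_pos_of_pos_Ioi (hw : ∀ x, a < x → IntervalIntegrable w volume a x)
    (hpos : ∀ t, a < t → 0 < w t) (hx : a < x) : 0 < ∫ t in a..x, w t :=
  intervalIntegral_pos_of_pos_on (hw x hx) (fun t ht => hpos t ht.1) hx

theorem weightedMean_lt_left (hw : ∀ x, a < x → IntervalIntegrable w volume a x)
    (hpos : ∀ t, a < t → 0 < w t) (hcont : ContinuousOn h (Ici a))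
    (hanti : StrictAntiOn h (Ici a)) (hx : a < x) : weightedMean w h a x < h a := by
  rw [weightedMean, div_lt_iff₀' (integral_pos_of_pos_Ioi hw hpos hx)]
  exact integral_mul_lt_of_strictAntiOn hx (hw x hx) (fun t ht => hpos t ht.1)
    (hcont.mono Icc_subset_Ici_self) (hanti.mono Icc_subset_Ici_self)

theorem lt_weightedMean_right (hw : ∀ x, a < x → IntervalIntegrable w volume a x)
    (hpos : ∀ t, a < t → 0 < w t) (hcont : ContinuousOn h (Ici a))
    (hanti : StrictAntiOn h (Ici a)) (hx : a < x) : h x < weightedMean w h a x := by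
  rw [weightedMean, lt_div_iff₀' (integral_pos_of_pos_Ioi hw hpos hx)]
  exact lt_integral_mul_of_strictAntiOn hx (hw x hx) (fun t ht => hpos t ht.1)
    (hcont.mono Icc_subset_Ici_self) (hanti.mono Icc_subset_Ici_self)

theorem intervalIntegrable_mul_of_continuousOn_Ici
    (hw : ∀ x, a < x → IntervalIntegrable w volume a x) (hcont : ContinuousOn h (Ici a))
    (hx : a < x) : IntervalIntegrable (fun t => w t * h t) volume a x :=
  (hw x hx).mul_continuousOn (hcont.mono (uIcc_of_le hx.le ▸ Icc_subset_Ici_self))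

/- Passing from `[a, x]` to `[a, y]` averages in the values of `h` on `[x, y]`; these lie below
`h x`, which in turn lies below the mean over `[a, x]`. -/
theorem strictAntiOn_weightedMean (hw : ∀ x, a < x → IntervalIntegrable w volume a x)
    (hpos : ∀ t, a < t → 0 < w t) (hcont : ContinuousOn h (Ici a))
    (hanti : StrictAntiOn h (Ici a)) : StrictAntiOn (weightedMean w h a) (Ioi a) := by
  intro x (hx : a < x) y (hy : a < y) hxy
  have hw_xy : IntervalIntegrable w volume x y := (hw x hx).symm.trans (hw y hy)
  have hwh {u : ℝ} (hu : a < u) := intervalIntegrable_mul_of_continuousOn_Ici hw hcont hu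
  have hsub : Icc x y ⊆ Ici a := fun t ht => hx.le.trans ht.1
  have hpos_xy : ∀ t ∈ Ioo x y, 0 < w t := fun t ht => hpos t (hx.trans ht.1)
  have htail_pos : 0 < ∫ t in x..y, w t := intervalIntegral_pos_of_pos_on hw_xy hpos_xy hxy
  have htail : ∫ t in x..y, w t * h t < (∫ t in x..y, w t) * weightedMean w h a x :=
    (integral_mul_lt_of_strictAntiOn hxy hw_xy hpos_xy (hcont.mono hsub) (hanti.mono hsub)).trans
      (mul_lt_mul_of_pos_left (lt_weightedMean_right hw hpos hcont hanti hx) htail_pos)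
  have hhead : ∫ t in a..x, w t * h t = (∫ t in a..x, w t) * weightedMean w h a x :=
    (mul_div_cancel₀ _ (integral_pos_of_pos_Ioi hw hpos hx).ne').symm
  rw [weightedMean, div_lt_iff₀' (integral_pos_of_pos_Ioi hw hpos hy),
    ← integral_add_adjacent_intervals (hw x hx) hw_xy,
    ← integral_add_adjacent_intervals (hwh hx) ((hwh hx).symm.trans (hwh hy)), add_mul, hhead]
  exact add_lt_add_right htail _

theorem continuousOn_weightedMean (hw : ∀ x, a < x → IntervalIntegrable w volume a x)
    (hpos : ∀ t, a < t → 0 < w t) (hcont : ContinuousOn h (Ici a)) :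
    ContinuousOn (weightedMean w h a) (Ioi a) :=
  (continuousOn_integral_Ioi fun _ hx =>
    intervalIntegrable_mul_of_continuousOn_Ici hw hcont hx).div (continuousOn_integral_Ioi hw)
    fun _ hx => (integral_pos_of_pos_Ioi hw hpos hx).ne'

theorem tendsto_weightedMean_nhdsGT (hw : ∀ x, a < x → IntervalIntegrable w volume a x)
    (hpos : ∀ t, a < t → 0 < w t) (hcont : ContinuousOn h (Ici a))
    (hanti : StrictAntiOn h (Ici a)) : Tendsto (weightedMean w h a) (𝓝[>] a) (𝓝 (h a)) := by
  have hright : Tendsto h (𝓝[>] a) (𝓝 (h a)) :=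
    (hcont a self_mem_Ici).mono_left (nhdsWithin_mono a Ioi_subset_Ici_self)
  refine tendsto_of_tendsto_of_tendsto_of_le_of_le' hright tendsto_const_nhds ?_ ?_
  all_goals filter_upwards [self_mem_nhdsWithin] with x hx
  · exact (lt_weightedMean_right hw hpos hcont hanti hx).le
  · exact (weightedMean_lt_left hw hpos hcont hanti hx).le

theorem tendsto_weightedMean_atTop (hw : IntegrableOn w (Ioi a))
    (hwh : IntegrableOn (fun t => w t * h t) (Ioi a)) (hne : ∫ t in Ioi a, w t ≠ 0) :
    Tendsto (weightedMean w h a) atTop (𝓝 ((∫ t in Ioi a, w t * h t) / ∫ t in Ioi a, w t)) :=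
  (intervalIntegral_tendsto_integral_Ioi a hwh tendsto_id).div
    (intervalIntegral_tendsto_integral_Ioi a hw tendsto_id) hne

end WeightedMean

theorem lt_of_strictAntiOn_of_tendsto_atTop {α β : Type*} [LinearOrder α] [NoMaxOrder α]
    [Preorder β] [TopologicalSpace β] [ClosedIicTopology β] {f : α → β} {a x : α} {q : β}
    (hf : StrictAntiOn f (Ioi a)) (hq : Tendsto f atTop (𝓝 q)) (hx : a < x) : q < f x := by
  have : Nonempty α := ⟨a⟩
  obtain ⟨u, hxu⟩ := exists_gt x
  have hu : a < u := hx.trans hxu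
  refine lt_of_le_of_lt (le_of_tendsto hq ?_) (hf hx hu hxu)
  filter_upwards [eventually_ge_atTop u] with y hy
  exact hf.antitoneOn hu (hu.trans_le hy) hy

/-- `f` changes sign on `(a, ∞)` exactly once, from positive to negative, and `c` is its zero there:
the shape of the derivative of a humped curve with its maximum at `c`. -/
def IsDownCrossing (f : ℝ → ℝ) (a c : ℝ) : Prop :=
  a < c ∧ (∀ x, a < x → x < c → 0 < f x) ∧ f c = 0 ∧ ∀ x, c < x → f x < 0

namespace IsDownCrossing

variable {f g : ℝ → ℝ} {a c d : ℝ}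

theorem unique (hc : IsDownCrossing f a c) (hd : IsDownCrossing f a d) : c = d := by
  obtain ⟨-, hc_pos, -, hc_neg⟩ := hc
  obtain ⟨had, -, hd_zero, -⟩ := hd
  rcases lt_trichotomy c d with hlt | heq | hgt
  · exact absurd hd_zero (hc_neg d hlt).ne
  · exact heq
  · exact absurd hd_zero (hc_pos d had hgt).ne'

theorem congr_sign (hc : IsDownCrossing f a c)
    (hfg : ∀ x, a < x → SignType.sign (g x) = SignType.sign (f x)) : IsDownCrossing g a c := by
  obtain ⟨hac, hpos, hzero, hneg⟩ := hc
  refine ⟨hac, fun x hx hxc => ?_, ?_, fun x hx => ?_⟩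
  · rw [← sign_eq_one_iff, hfg x hx, sign_eq_one_iff]
    exact hpos x hx hxc
  · rw [← sign_eq_zero_iff, hfg c hac, sign_eq_zero_iff]
    exact hzero
  · rw [← sign_eq_neg_one_iff, hfg x (hac.trans hx), sign_eq_neg_one_iff]
    exact hneg x hx

end IsDownCrossing

theorem exists_isDownCrossing_of_strictAntiOn {f : ℝ → ℝ} {a p q : ℝ}
    (hf : StrictAntiOn f (Ioi a)) (hcont : ContinuousOn f (Ioi a))
    (hp : Tendsto f (𝓝[>] a) (𝓝 p)) (hq : Tendsto f atTop (𝓝 q)) (hp_pos : 0 < p)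
    (hq_neg : q < 0) : ∃ c, IsDownCrossing f a c := by
  obtain ⟨c, hac, hzero⟩ : (0 : ℝ) ∈ f '' Ioi a :=
    isPreconnected_Ioi.intermediate_value_Ioo (le_principal_iff.2 (Ioi_mem_atTop a))
      (le_principal_iff.2 self_mem_nhdsWithin) hcont hq hp ⟨hq_neg, hp_pos⟩
  refine ⟨c, hac, fun x hx hxc => ?_, hzero, fun x hcx => ?_⟩
  · exact hzero ▸ hf hx hac hxc
  · exact hzero ▸ hf hac (hac.trans hcx) hcx

theorem integral_pow_mul_exp_neg_mul_Ioi (k : ℕ) {c : ℝ} (hc : 0 < c) :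
    ∫ t in Ioi (0 : ℝ), t ^ k * Real.exp (-(c * t)) = k.factorial / c ^ (k + 1) := by
  have hGamma := Real.integral_rpow_mul_exp_neg_mul_Ioi (a := k + 1) (by positivity) hc
  rw [Real.Gamma_nat_eq_factorial] at hGamma
  simpa [div_eq_inv_mul, Real.inv_rpow hc.le, ← Real.rpow_natCast] using hGamma

theorem integrableOn_pow_mul_exp_neg_mul_Ioi (k : ℕ) {c : ℝ} (hc : 0 < c) :
    IntegrableOn (fun t : ℝ => t ^ k * Real.exp (-(c * t))) (Ioi 0) :=
  .of_integral_ne_zero (by rw [integral_pow_mul_exp_neg_mul_Ioi k hc]; positivity)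

section Vasicek

/-- The weight `w(t) = t e^{-λt}` in the factorization `t l(t) = w(t) h(t)` of the integrand of the
yield slope `m`. -/
noncomputable def vasicekWeight (lam t : ℝ) : ℝ :=
  t * Real.exp (-(lam * t))

/-- The function `h(t) = A e^{-λt} + B` in the factorization `t l(t) = w(t) h(t)`: it is the slope
`l(t)` of the forward curve divided by `e^{-λt}`. -/
noncomputable def vasicekProfile (lam A B t : ℝ) : ℝ :=
  A * Real.exp (-(lam * t)) + B

/-- The mean over `[0, x]` of the profile `h` with respect to the weight `w`; it has the sign of the
yield slope `m(x)`. -/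
noncomputable def vasicekMean (lam A B x : ℝ) : ℝ :=
  weightedMean (vasicekWeight lam) (vasicekProfile lam A B) 0 x

variable {lam A B x : ℝ}

theorem intervalIntegrable_vasicekWeight (lam a b : ℝ) :
    IntervalIntegrable (vasicekWeight lam) volume a b :=
  Continuous.intervalIntegrable (by unfold vasicekWeight; fun_prop) a b

theorem vasicekWeight_pos {t : ℝ} (ht : 0 < t) : 0 < vasicekWeight lam t :=
  mul_pos ht (Real.exp_pos _)

theorem continuous_vasicekProfile (lam A B : ℝ) : Continuous (vasicekProfile lam A B) := by
  unfold vasicekProfile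
  fun_prop

theorem strictAnti_vasicekProfile (hlam : 0 < lam) (hA : 0 < A) (B : ℝ) :
    StrictAnti (vasicekProfile lam A B) := by
  intro s t hst
  unfold vasicekProfile
  gcongr

theorem vasicekProfile_zero : vasicekProfile lam A B 0 = A + B := by
  simp [vasicekProfile]

theorem vasicekWeight_mul_vasicekProfile (lam A B t : ℝ) :
    vasicekWeight lam t * vasicekProfile lam A B t =
      A * vasicekWeight (2 * lam) t + B * vasicekWeight lam t := by
  have hexp : Real.exp (-(2 * lam * t)) = Real.exp (-(lam * t)) * Real.exp (-(lam * t)) := by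
    rw [← Real.exp_add]
    ring_nf
  simp only [vasicekWeight, vasicekProfile, hexp]
  ring

theorem integral_vasicekWeight_Ioi (hlam : 0 < lam) :
    ∫ t in Ioi (0 : ℝ), vasicekWeight lam t = (lam ^ 2)⁻¹ := by
  simpa [vasicekWeight] using integral_pow_mul_exp_neg_mul_Ioi 1 hlam

theorem integrableOn_vasicekWeight_Ioi (hlam : 0 < lam) :
    IntegrableOn (vasicekWeight lam) (Ioi 0) := by
  unfold vasicekWeight
  simpa using integrableOn_pow_mul_exp_neg_mul_Ioi 1 hlam

theorem tendsto_vasicekMean_atTop (hlam : 0 < lam) (A B : ℝ) :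
    Tendsto (vasicekMean lam A B) atTop (𝓝 (A / 4 + B)) := by
  have hw := integrableOn_vasicekWeight_Ioi hlam
  have hw₂ := integrableOn_vasicekWeight_Ioi (show 0 < 2 * lam by positivity)
  have hwh : IntegrableOn (fun t => vasicekWeight lam t * vasicekProfile lam A B t) (Ioi 0) := by
    simp only [vasicekWeight_mul_vasicekProfile]
    exact (hw₂.const_mul A).add (hw.const_mul B)
  have hlim := tendsto_weightedMean_atTop hw hwh
    (by rw [integral_vasicekWeight_Ioi hlam]; positivity)
  simp only [vasicekWeight_mul_vasicekProfile] at hlim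
  rw [integral_add (hw₂.const_mul A) (hw.const_mul B), MeasureTheory.integral_const_mul,
    MeasureTheory.integral_const_mul, integral_vasicekWeight_Ioi hlam,
    integral_vasicekWeight_Ioi (by positivity)] at hlim
  have hvalue : (A * ((2 * lam) ^ 2)⁻¹ + B * (lam ^ 2)⁻¹) / (lam ^ 2)⁻¹ = A / 4 + B := by
    field_simp
    ring
  rwa [hvalue] at hlim

theorem strictAntiOn_vasicekMean (hlam : 0 < lam) (hA : 0 < A) (B : ℝ) :
    StrictAntiOn (vasicekMean lam A B) (Ioi 0) :=
  strictAntiOn_weightedMean (fun _ _ => intervalIntegrable_vasicekWeight lam _ _)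
    (fun _ => vasicekWeight_pos) (continuous_vasicekProfile lam A B).continuousOn
    ((strictAnti_vasicekProfile hlam hA B).strictAntiOn _)

theorem vasicekMean_pos (hlam : 0 < lam) (hA : 0 < A) (hAB : 0 ≤ A / 4 + B) (hx : 0 < x) :
    0 < vasicekMean lam A B x :=
  hAB.trans_lt <| lt_of_strictAntiOn_of_tendsto_atTop (strictAntiOn_vasicekMean hlam hA B)
    (tendsto_vasicekMean_atTop hlam A B) hx

theorem vasicekMean_neg (hlam : 0 < lam) (hA : 0 < A) (hAB : A + B ≤ 0) (hx : 0 < x) :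
    vasicekMean lam A B x < 0 := by
  rw [← vasicekProfile_zero (lam := lam)] at hAB
  exact (weightedMean_lt_left (fun _ _ => intervalIntegrable_vasicekWeight lam _ _)
    (fun _ => vasicekWeight_pos) (continuous_vasicekProfile lam A B).continuousOn
    ((strictAnti_vasicekProfile hlam hA B).strictAntiOn _) hx).trans_le hAB

theorem exists_isDownCrossing_vasicekMean (hlam : 0 < lam) (hA : 0 < A) (h_zero : 0 < A + B)
    (h_top : A / 4 + B < 0) : ∃ c, IsDownCrossing (vasicekMean lam A B) 0 c := by
  have hw (x : ℝ) (_ : 0 < x) := intervalIntegrable_vasicekWeight lam 0 x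
  have hpos (t : ℝ) : 0 < t → 0 < vasicekWeight lam t := vasicekWeight_pos
  have hcont := (continuous_vasicekProfile lam A B).continuousOn (s := Ici 0)
  have hanti := (strictAnti_vasicekProfile hlam hA B).strictAntiOn (Ici 0)
  rw [← vasicekProfile_zero (lam := lam)] at h_zero
  exact exists_isDownCrossing_of_strictAntiOn (strictAntiOn_weightedMean hw hpos hcont hanti)
    (continuousOn_weightedMean hw hpos hcont) (tendsto_weightedMean_nhdsGT hw hpos hcont hanti)
    (tendsto_vasicekMean_atTop hlam A B) h_zero h_top

theorem sign_inv_sq_mul_integral_eq_sign_vasicekMean {l : ℝ → ℝ}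
    (hl : ∀ x, l x = A * Real.exp (-(2 * lam * x)) + B * Real.exp (-(lam * x))) (hx : 0 < x) :
    SignType.sign ((x ^ 2)⁻¹ * ∫ t in (0 : ℝ)..x, t * l t) =
      SignType.sign (vasicekMean lam A B x) := by
  have hfactor (t : ℝ) : t * l t = vasicekWeight lam t * vasicekProfile lam A B t := by
    rw [vasicekWeight_mul_vasicekProfile, hl, vasicekWeight, vasicekWeight]
    ring
  have hW : 0 < ∫ t in (0 : ℝ)..x, vasicekWeight lam t :=
    integral_pos_of_pos_Ioi (fun _ _ => intervalIntegrable_vasicekWeight lam _ _)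
      (fun _ => vasicekWeight_pos) hx
  simp only [hfactor, vasicekMean, weightedMean, div_eq_mul_inv, sign_mul, sign_pos (inv_pos.2 hW),
    sign_pos (inv_pos.2 (sq_pos_of_pos hx)), one_mul, mul_one]

end Vasicek

/-- Classification of yield-curve shapes in the one-factor Vasicek model:
normal, inverse and humped, according to the position of the state `z`. -/
theorem vasicek_yield_shapes (lam kap sig th z : ℝ)
    (hlam : 0 < lam) (hkap : 0 < kap) (hsig : 0 < sig)
    (l m : ℝ → ℝ)
    (hl : ∀ x : ℝ, l x = sig ^ 2 * kap ^ 2 / lam * Real.exp (-(2 * lam * x)) +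
        (kap * lam * (th - z) - sig ^ 2 * kap ^ 2 / lam) * Real.exp (-(lam * x)))
    (hm : ∀ x : ℝ, 0 < x → m x = (x ^ 2)⁻¹ * ∫ t in (0 : ℝ)..x, t * l t) :
    (z ≤ th - 3 * sig ^ 2 * kap / (4 * lam ^ 2) → ∀ x : ℝ, 0 < x → 0 < m x) ∧
    (th ≤ z → ∀ x : ℝ, 0 < x → m x < 0) ∧
    (th - 3 * sig ^ 2 * kap / (4 * lam ^ 2) < z → z < th →
      ∃! xs : ℝ, 0 < xs ∧ (∀ x : ℝ, 0 < x → x < xs → 0 < m x) ∧ m xs = 0 ∧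
        ∀ x : ℝ, xs < x → m x < 0) := by
  set A := sig ^ 2 * kap ^ 2 / lam with hA_def
  set B := kap * lam * (th - z) - A with hB_def
  have hA : 0 < A := by positivity
  have hkl : 0 < kap * lam := by positivity
  have h_zero : A + B = kap * lam * (th - z) := by rw [hB_def]; ring
  have h_top : A / 4 + B = kap * lam * (th - 3 * sig ^ 2 * kap / (4 * lam ^ 2) - z) := by
    rw [hB_def, hA_def]; field_simp; ring
  have hsign (x : ℝ) (hx : 0 < x) :
      SignType.sign (m x) = SignType.sign (vasicekMean lam A B x) := by
    rw [hm x hx, sign_inv_sq_mul_integral_eq_sign_vasicekMean hl hx]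
  refine ⟨fun hz x hx => ?normal, fun hz x hx => ?inverse, fun hz_low hz_high => ?humped⟩
  case normal =>
    rw [← sign_eq_one_iff, hsign x hx, sign_eq_one_iff]
    exact vasicekMean_pos hlam hA (h_top ▸ mul_nonneg hkl.le (by linarith)) hx
  case inverse =>
    rw [← sign_eq_neg_one_iff, hsign x hx, sign_eq_neg_one_iff]
    exact vasicekMean_neg hlam hA (h_zero ▸ mul_nonpos_of_nonneg_of_nonpos hkl.le (by linarith)) hx
  case humped =>
    obtain ⟨c, hc⟩ := exists_isDownCrossing_vasicekMean hlam hA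
      (h_zero ▸ mul_pos hkl (by linarith)) (h_top ▸ mul_neg_of_pos_of_neg hkl (by linarith))
    have hc_m : IsDownCrossing m 0 c := hc.congr_sign hsign
    exact ⟨c, hc_m, fun y hy => IsDownCrossing.unique hy hc_m⟩
end

section
/- Define g_α(x) := x⁻² ∫₀ˣ y·e^{−αy} dy for x > 0 and α ≥ 0. Then for every m ≥ 1, all exponents β₁ > β₂ > ... > βₘ ≥ 0, and all points 0 < x₁ < x₂ < ... < xₘ, the m×m matrix whose (i,j) entry is g_{βⱼ}(xᵢ) has strictly positive determinant. -/
open MeasureTheory intervalIntegral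

/-!
Positivity of the determinants `det (fⱼ(tᵢ))` at increasing points survives integration: a
determinant of integrals `det (∫ fⱼ dμᵢ)` is the integral of `det (fⱼ(tᵢ))` against the product
measure. If the `μᵢ` live on consecutive intervals, the points `tᵢ` are automatically increasing,
and row operations turn integrals over consecutive intervals into differences of primitives. So
if `f₁, …, fₙ` have positive determinants, then so do `1, F₁, …, Fₙ` for primitives `Fⱼ` of `fⱼ`,
and so do `∫ₐˣ f₁, …, ∫ₐˣ fₙ` to the right of `a`.

The first fact gives the exponentials by induction: dividing `e^{γⱼx}` by `e^{γ₀x}` makes the first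
function constant, and the derivatives of the others are positive multiples of exponentials. The
second, applied to `t e^{-βⱼt}` on `(0, ∞)`, gives the functions `g_β`.
-/

section Integral

variable {ι : Type*} [Fintype ι] [DecidableEq ι] {X : ι → Type*} [∀ i, MeasurableSpace (X i)]
  {μ : ∀ i, Measure (X i)} [∀ i, SigmaFinite (μ i)]

theorem integrable_det_pi {𝕜 : Type*} [NormedCommRing 𝕜] {f : ∀ i, ι → X i → 𝕜}
    (hf : ∀ i j, Integrable (f i j) (μ i)) :
    Integrable (fun t => (Matrix.of fun i j => f i j (t i)).det) (Measure.pi μ) := by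
  simp_rw [← Matrix.det_transpose (Matrix.of _), Matrix.det_apply']
  exact integrable_finsetSum _ fun σ _ =>
    (Integrable.fintype_prod_dep fun i => hf i (σ i)).const_mul _

theorem det_integral_eq_integral_det {𝕜 : Type*} [RCLike 𝕜] {f : ∀ i, ι → X i → 𝕜}
    (hf : ∀ i j, Integrable (f i j) (μ i)) :
    (Matrix.of fun i j => ∫ s, f i j s ∂μ i).det =
      ∫ t, (Matrix.of fun i j => f i j (t i)).det ∂Measure.pi μ := by
  simp_rw [← Matrix.det_transpose (Matrix.of _), Matrix.det_apply']
  rw [integral_finsetSum _ fun σ _ =>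
    (Integrable.fintype_prod_dep fun i => hf i (σ i)).const_mul _]
  refine Finset.sum_congr rfl fun σ _ => ?_
  rw [MeasureTheory.integral_const_mul]
  exact congrArg _ (integral_fintype_prod_eq_prod fun i s => f i (σ i) s).symm

theorem det_integral_pos {f : ∀ i, ι → X i → ℝ} (hf : ∀ i j, Integrable (f i j) (μ i))
    (hμ : ∀ i, μ i ≠ 0) {S : ∀ i, Set (X i)} (hS : ∀ i, ∀ᵐ s ∂μ i, s ∈ S i)
    (hpos : ∀ t : ∀ i, X i, (∀ i, t i ∈ S i) → 0 < (Matrix.of fun i j => f i j (t i)).det) :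
    0 < (Matrix.of fun i j => ∫ s, f i j s ∂μ i).det := by
  have hpos_ae : ∀ᵐ t ∂Measure.pi μ, 0 < (Matrix.of fun i j => f i j (t i)).det :=
    (Filter.eventually_all.2 fun i => Measure.tendsto_eval_ae_ae.eventually (hS i)).mono hpos
  have hpi : Measure.pi μ ≠ 0 := by
    rw [← Measure.measure_univ_ne_zero, Measure.pi_univ, Finset.prod_ne_zero_iff]
    exact fun i _ => Measure.measure_univ_ne_zero.2 (hμ i)
  rw [det_integral_eq_integral_det hf, integral_pos_iff_support_of_nonneg_ae
    (hpos_ae.mono fun _ h => h.le) (integrable_det_pi hf), pos_iff_ne_zero]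
  have : (ae (Measure.pi μ)).NeBot := ae_neBot.2 hpi
  exact frequently_ae_mem_iff.1 (hpos_ae.mono fun _ h => h.ne').frequently

end Integral

theorem det_cons_one_eq_det_succ_sub_castSucc {R : Type*} [CommRing R] {n : ℕ}
    (A : Matrix (Fin (n + 1)) (Fin n) R) :
    (Matrix.of fun i => (Fin.cons 1 (A i) : Fin (n + 1) → R)).det =
      (Matrix.of fun i j => A (Fin.succ i) j - A (Fin.castSucc i) j).det := by
  let B : Matrix (Fin (n + 1)) (Fin (n + 1)) R := Fin.cons (Fin.cons 1 (A 0)) fun i =>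
    Fin.cons 0 fun j => A i.succ j - A i.castSucc j
  have hB : (Matrix.of fun i => (Fin.cons 1 (A i) : Fin (n + 1) → R)).det = B.det :=
    Matrix.det_eq_of_forall_row_eq_smul_add_pred 1 (fun j => by simp [B])
      fun i j => by cases j using Fin.cases <;> simp [B]
  rw [hB, Matrix.det_succ_column_zero, Fin.sum_univ_succ]
  simp [B, Matrix.submatrix, Matrix.of]

/-- A finite family of functions is a Chebyshev system on `s`, with the positive orientation, if
all its collocation determinants at increasing points of `s` are positive. A Descartes system is a
family all of whose subfamilies, in the induced order, have this property. -/
def IsChebyshevSystemOn {X R : Type*} [Preorder X] [CommRing R] [LT R] {n : ℕ}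
    (f : Fin n → X → R) (s : Set X) : Prop :=
  ∀ ⦃t : Fin n → X⦄, StrictMono t → (∀ i, t i ∈ s) → 0 < (Matrix.of fun i j => f j (t i)).det

namespace IsChebyshevSystemOn

theorem mono {X R : Type*} [Preorder X] [CommRing R] [LT R] {n : ℕ} {f : Fin n → X → R}
    {s s' : Set X} (h : IsChebyshevSystemOn f s) (hs : s' ⊆ s) : IsChebyshevSystemOn f s' :=
  fun _ ht hts => h ht fun i => hs (hts i)

section Mul

variable {X R : Type*} [Preorder X] [CommRing R] [PartialOrder R] [IsStrictOrderedRing R] {n : ℕ}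
  {f : Fin n → X → R} {s : Set X}

theorem fun_mul (h : IsChebyshevSystemOn f s) {w : X → R} (hw : ∀ x ∈ s, 0 < w x) :
    IsChebyshevSystemOn (fun j x => w x * f j x) s := fun t ht hts =>
  (mul_pos (Finset.prod_pos fun i _ => hw (t i) (hts i)) (h ht hts)).trans_eq
    (Matrix.det_mul_column (fun i => w (t i)) _).symm

theorem const_mul (h : IsChebyshevSystemOn f s) {c : Fin n → R} (hc : ∀ j, 0 < c j) :
    IsChebyshevSystemOn (fun j x => c j * f j x) s := fun _ ht hts =>
  (mul_pos (Finset.prod_pos fun j _ => hc j) (h ht hts)).trans_eq (Matrix.det_mul_row c _).symm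

end Mul

variable {n : ℕ} {f : Fin n → ℝ → ℝ}

theorem det_intervalIntegral_pos {s : Set ℝ} (h : IsChebyshevSystemOn f s) {a b : Fin n → ℝ}
    (hab : ∀ i, a i < b i) (hba : ∀ ⦃i j⦄, i < j → b i ≤ a j)
    (hf : ∀ i j, IntervalIntegrable (f j) volume (a i) (b i))
    (hs : ∀ i, Set.Ioo (a i) (b i) ⊆ s) :
    0 < (Matrix.of fun i j => ∫ x in a i..b i, f j x).det := by
  simp_rw [integral_of_le (hab _).le, integral_Ioc_eq_integral_Ioo]
  refine det_integral_pos (S := fun i => Set.Ioo (a i) (b i))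
    (fun i j => (intervalIntegrable_iff_integrableOn_Ioo_of_le (hab i).le).1 (hf i j))
    (fun i => by simpa using hab i) (fun i => ae_restrict_mem measurableSet_Ioo)
    fun t ht => h (fun i j hij => ?_) fun i => hs i (ht i)
  exact (ht i).2.trans_le ((hba hij).trans (ht j).1.le)

theorem cons_one_of_integral_eq_sub {F : Fin n → ℝ → ℝ} {s : Set ℝ} [hs : s.OrdConnected]
    (h : IsChebyshevSystemOn f (interior s)) (hf : ∀ j, LocallyIntegrableOn (f j) s)
    (hF : ∀ j, ∀ x ∈ s, ∀ y ∈ s, ∫ t in x..y, f j t = F j y - F j x) :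
    IsChebyshevSystemOn (Fin.cons 1 F : Fin (n + 1) → ℝ → ℝ) s := by
  intro t ht hts
  have hdet : (Matrix.of fun i j => (Fin.cons 1 F : Fin (n + 1) → ℝ → ℝ) j (t i)).det =
      (Matrix.of fun i j => ∫ x in t (Fin.castSucc i)..t (Fin.succ i), f j x).det := by
    simp_rw [hF _ _ (hts _) _ (hts _)]
    rw [← det_cons_one_eq_det_succ_sub_castSucc fun i j => F j (t i)]
    congr with i j
    cases j using Fin.cases <;> rfl
  rw [hdet]
  refine h.det_intervalIntegral_pos (fun i => ht Fin.castSucc_lt_succ)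
    (fun i j hij => ht.monotone (Fin.le_castSucc_iff.2 (Fin.succ_lt_succ_iff.2 hij)))
    (fun i j => ?_) fun i => ?_
  · exact ((hf j).integrableOn_compact_subset (hs.uIcc_subset (hts _) (hts _))
      isCompact_uIcc).intervalIntegrable
  · exact interior_maximal (Set.Ioo_subset_Icc_self.trans (hs.out (hts _) (hts _))) isOpen_Ioo

theorem intervalIntegral {a : ℝ} (h : IsChebyshevSystemOn f (Set.Ioi a))
    (hf : ∀ j, LocallyIntegrableOn (f j) (Set.Ici a)) :
    IsChebyshevSystemOn (fun j x => ∫ t in a..x, f j t) (Set.Ioi a) := by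
  have hint : ∀ j, ∀ x ∈ Set.Ici a, IntervalIntegrable (f j) volume a x := fun j x hx =>
    ((hf j).integrableOn_compact_subset (Set.ordConnected_Ici.uIcc_subset Set.self_mem_Ici hx)
      isCompact_uIcc).intervalIntegrable
  have hcons : IsChebyshevSystemOn
      (Fin.cons 1 fun j x => ∫ t in a..x, f j t : Fin (n + 1) → ℝ → ℝ) (Set.Ici a) :=
    cons_one_of_integral_eq_sub (by rwa [interior_Ici]) hf fun j x hx y hy =>
      (integral_interval_sub_left (hint j y hy) (hint j x hx)).symm
  intro t ht hta
  -- At the base point `a` all the integrals vanish, so the row of `a` is `(1, 0, …, 0)`.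
  have hpos := hcons (Fin.strictMono_cons.2 ⟨hta, ht⟩)
    (Fin.cases Set.self_mem_Ici fun i => Set.mem_Ici_of_Ioi (hta i))
  rw [Matrix.det_succ_row_zero, Fin.sum_univ_succ] at hpos
  simpa [Matrix.submatrix] using hpos

end IsChebyshevSystemOn

theorem isChebyshevSystemOn_exp_mul {n : ℕ} {γ : Fin n → ℝ} (hγ : StrictMono γ) :
    IsChebyshevSystemOn (fun j x => Real.exp (γ j * x)) Set.univ := by
  induction n with
  | zero => intro t _ _; simp
  | succ n ih =>
    let δ : Fin n → ℝ := fun j => γ j.succ - γ 0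
    have hδ : StrictMono δ := fun i j hij =>
      sub_lt_sub_right (hγ (Fin.succ_lt_succ_iff.2 hij)) _
    have hderiv : IsChebyshevSystemOn (fun j x => δ j * Real.exp (δ j * x)) Set.univ :=
      (ih hδ).const_mul fun j => sub_pos.2 (hγ j.succ_pos)
    have hcons : IsChebyshevSystemOn
        (Fin.cons 1 fun j x => Real.exp (δ j * x) : Fin (n + 1) → ℝ → ℝ) Set.univ := by
      have hcont : ∀ j, Continuous fun x => δ j * Real.exp (δ j * x) := fun j => by fun_prop
      refine .cons_one_of_integral_eq_sub (by rwa [interior_univ])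
        (fun j => (hcont j).locallyIntegrable.locallyIntegrableOn _) fun j x _ y _ => ?_
      rw [intervalIntegral.integral_const_mul, mul_integral_comp_mul_left, integral_exp]
    have hfactor : (fun j x => Real.exp (γ j * x)) = fun j x => Real.exp (γ 0 * x) *
        (Fin.cons 1 fun j x => Real.exp (δ j * x) : Fin (n + 1) → ℝ → ℝ) j x := by
      ext j x
      cases j using Fin.cases with
      | zero => simp
      | succ j => simp [δ, ← Real.exp_add, sub_mul]
    rw [hfactor]
    exact hcons.fun_mul fun x _ => Real.exp_pos _

theorem g_descartes_system_general {m : ℕ} {β : Fin m → ℝ} (hβ : StrictAnti β) :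
    IsChebyshevSystemOn
      (fun j x => (x ^ 2)⁻¹ * ∫ t in (0 : ℝ)..x, t * Real.exp (-(β j * t))) (Set.Ioi 0) := by
  have hexp : IsChebyshevSystemOn (fun j t => Real.exp (-(β j * t))) (Set.Ioi 0) := by
    simpa only [Pi.neg_apply, neg_mul] using
      (isChebyshevSystemOn_exp_mul hβ.neg).mono (Set.subset_univ (Set.Ioi 0))
  have hkernel : IsChebyshevSystemOn (fun j t => t * Real.exp (-(β j * t))) (Set.Ioi 0) :=
    hexp.fun_mul fun _ ht => ht
  have hcont : ∀ j, Continuous fun t => t * Real.exp (-(β j * t)) := fun j => by fun_prop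
  have hintegral := hkernel.intervalIntegral fun j =>
    (hcont j).locallyIntegrable.locallyIntegrableOn _
  exact hintegral.fun_mul fun x hx => inv_pos.2 (pow_pos hx 2)

/-- The family `(g_{β₁}, ..., g_{βₘ})` with `β₁ > ... > βₘ ≥ 0`, where
`g_α(x) = x⁻² ∫₀ˣ y e^{−αy} dy`, is a Descartes system on `(0,∞)`:
all its minors at increasing points are strictly positive. -/
theorem g_descartes_system (m : ℕ) (hm : 1 ≤ m)
    (β : Fin m → ℝ) (hβ : StrictAnti β) (hβ0 : ∀ j, 0 ≤ β j)
    (x : Fin m → ℝ) (hx : StrictMono x) (hx0 : ∀ i, 0 < x i) :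
    0 < (Matrix.of fun i j : Fin m =>
      ((x i) ^ 2)⁻¹ * ∫ t in (0 : ℝ)..(x i), t * Real.exp (-(β j * t))).det :=
  g_descartes_system_general hβ hx hx0
end

section
/- Let 0 < λ₁ < λ₂ ≤ 2λ₁, let u₁, u₂ ≥ 0, c ≥ 0 and w₁, w₂ ∈ ℝ, define l(x) = u₂e^{−2λ₂x} + c·e^{−(λ₁+λ₂)x} + w₂e^{−λ₂x} + u₁e^{−2λ₁x} + w₁e^{−λ₁x}, and define m(x) := x⁻² ∫₀ˣ y·l(y) dy for x > 0. Then for q ∈ {l, m} there do not exist points 0 < x₁ < x₂ < x₃ with q(x₁) < 0, q(x₂) > 0, and q(x₃) < 0. -/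
/-!
Dividing `l` by `exp (-lam1 x)` and substituting `s = exp (-(lam2 - lam1) x)` turns it into a
function of `s` that is affine up to nonnegative multiples of powers `s ^ p`; the condition
`lam2 ≤ 2 * lam1` is what makes every `p` at least one. That function is convex, so it cannot be
negative, positive and negative again, and neither can `l`. The pattern passes to the derivative of
the yield curve because a primitive vanishing at `0` changes sign only after its integrand does.
-/

open MeasureTheory intervalIntegral

open Set

/-- `f` never takes the sign pattern `(−, +, −)` along `s`: between two points of `s` where it is
negative it is nowhere positive. The weak inequalities between the points cost nothing, since the
three signs already force the points to be distinct. -/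
def NoMinusPlusMinusOn {α : Type*} [Preorder α] (f : α → ℝ) (s : Set α) : Prop :=
  ∀ ⦃x⦄, x ∈ s → ∀ ⦃y⦄, y ∈ s → ∀ ⦃z⦄, z ∈ s → x ≤ y → y ≤ z → f x < 0 → f z < 0 → f y ≤ 0

namespace NoMinusPlusMinusOn

section Preorder

variable {α β : Type*} [Preorder α] [Preorder β] {f : α → ℝ} {s t : Set α}

theorem mono (hf : NoMinusPlusMinusOn f t) (hst : s ⊆ t) : NoMinusPlusMinusOn f s :=
  fun _ hx _ hy _ hz ↦ hf (hst hx) (hst hy) (hst hz)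

theorem nonneg_mul {g : α → ℝ} (hf : NoMinusPlusMinusOn f s) (hg : ∀ x ∈ s, 0 ≤ g x) :
    NoMinusPlusMinusOn (fun x ↦ g x * f x) s := by
  intro x hx y hy z hz hxy hyz hfx hfz
  have hfx' : f x < 0 := neg_of_mul_neg_right hfx (hg x hx)
  have hfz' : f z < 0 := neg_of_mul_neg_right hfz (hg z hz)
  exact mul_nonpos_of_nonneg_of_nonpos (hg y hy) (hf hx hy hz hxy hyz hfx' hfz')

theorem comp_antitoneOn {g : β → α} {r : Set β} (hf : NoMinusPlusMinusOn f s)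
    (hg : AntitoneOn g r) (hgs : MapsTo g r s) : NoMinusPlusMinusOn (f ∘ g) r :=
  fun _ hx _ hy _ hz hxy hyz hfx hfz ↦
    hf (hgs hz) (hgs hy) (hgs hx) (hg hy hz hyz) (hg hx hy hxy) hfz hfx

end Preorder

theorem of_quasiconvexOn {𝕜 : Type*} [Field 𝕜] [LinearOrder 𝕜] [IsStrictOrderedRing 𝕜]
    {f : 𝕜 → ℝ} {s : Set 𝕜} (hf : QuasiconvexOn 𝕜 s f) : NoMinusPlusMinusOn f s :=
  fun _ hx _ _ _ hz hxy hyz hfx hfz ↦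
    ((hf 0).ordConnected.out ⟨hx, hfx.le⟩ ⟨hz, hfz.le⟩ ⟨hxy, hyz⟩).2

end NoMinusPlusMinusOn

section Integral

variable {f : ℝ → ℝ} {a b : ℝ} {μ : Measure ℝ}

theorem exists_neg_of_intervalIntegral_neg (hab : a ≤ b) (h : ∫ t in a..b, f t ∂μ < 0) :
    ∃ t ∈ Icc a b, f t < 0 := by
  contrapose! h
  exact integral_nonneg hab h

theorem exists_pos_of_intervalIntegral_pos (hab : a ≤ b) (h : 0 < ∫ t in a..b, f t ∂μ) :
    ∃ t ∈ Icc a b, 0 < f t := by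
  have hneg : ∫ t in a..b, -f t ∂μ < 0 := by rwa [intervalIntegral.integral_neg, neg_lt_zero]
  simpa only [neg_lt_zero] using exists_neg_of_intervalIntegral_neg hab hneg

theorem NoMinusPlusMinusOn.primitive (hf : NoMinusPlusMinusOn f (Ici a))
    (hint : ∀ b, a ≤ b → IntervalIntegrable f μ a b) :
    NoMinusPlusMinusOn (fun x ↦ ∫ t in a..x, f t ∂μ) (Ici a) := by
  intro x hx y hy z hz hxy hyz hIx hIz
  by_contra! hIy
  have hIxy : 0 < ∫ t in x..y, f t ∂μ := by
    rw [← integral_interval_sub_left (hint y hy) (hint x hx)]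
    linarith
  have hIyz : ∫ t in y..z, f t ∂μ < 0 := by
    rw [← integral_interval_sub_left (hint z hz) (hint y hy)]
    linarith
  obtain ⟨p, ⟨hap, hpx⟩, hfp⟩ := exists_neg_of_intervalIntegral_neg hx hIx
  obtain ⟨q, ⟨hxq, hqy⟩, hfq⟩ := exists_pos_of_intervalIntegral_pos hxy hIxy
  obtain ⟨r, ⟨hyr, -⟩, hfr⟩ := exists_neg_of_intervalIntegral_neg hyz hIyz
  exact (hf hap (hx.trans hxq) (hy.trans hyr) (hpx.trans hxq) (hqy.trans hyr) hfp hfr).not_gt hfq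

end Integral

theorem convexOn_finset_sum {𝕜 E β κ : Type*} [Semiring 𝕜] [PartialOrder 𝕜] [AddCommMonoid E]
    [SMul 𝕜 E] [AddCommMonoid β] [PartialOrder β] [IsOrderedAddMonoid β] [Module 𝕜 β]
    {s : Set E} {t : Finset κ} {f : κ → E → β} (hs : Convex 𝕜 s)
    (hf : ∀ i ∈ t, ConvexOn 𝕜 s (f i)) : ConvexOn 𝕜 s fun x ↦ ∑ i ∈ t, f i x := by
  rw [← Finset.sum_fn]
  exact Finset.sum_induction f (ConvexOn 𝕜 s) (fun _ _ ↦ ConvexOn.add) (convexOn_const 0 hs) hf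

section ExponentialSum

variable {ι : Type*} [Fintype ι] {a : ι → ℝ}

theorem convexOn_sum_rpow_add_affine {p : ι → ℝ} (ha : ∀ i, 0 ≤ a i) (hp : ∀ i, 1 ≤ p i)
    (v w : ℝ) : ConvexOn ℝ (Ici 0) fun s : ℝ ↦ ∑ i, a i * s ^ p i + v * s + w := by
  have hpow : ConvexOn ℝ (Ici 0) fun s : ℝ ↦ ∑ i, a i * s ^ p i :=
    convexOn_finset_sum (convex_Ici 0) fun i _ ↦ (convexOn_rpow (hp i)).smul (ha i)
  have hlin : ConvexOn ℝ (Ici 0) fun s : ℝ ↦ v * s :=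
    (LinearMap.mul ℝ ℝ v).convexOn (convex_Ici 0)
  exact (hpow.add hlin).add_const w

theorem exp_mul_exp_rpow_div {d : ℝ} (hd : d ≠ 0) (r k x : ℝ) :
    Real.exp (-(r * x)) * Real.exp (-(d * x)) ^ ((k - r) / d) = Real.exp (-(k * x)) := by
  rw [← Real.exp_mul, ← Real.exp_add]
  congr 1
  field_simp
  ring

theorem noMinusPlusMinusOn_exponentialSum {k : ι → ℝ} {r₁ r₂ : ℝ} (hr : r₁ < r₂)
    (ha : ∀ i, 0 ≤ a i) (hk : ∀ i, r₂ ≤ k i) (v w : ℝ) :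
    NoMinusPlusMinusOn (fun x : ℝ ↦ ∑ i, a i * Real.exp (-(k i * x)) +
      v * Real.exp (-(r₂ * x)) + w * Real.exp (-(r₁ * x))) univ := by
  have hd : 0 < r₂ - r₁ := sub_pos.mpr hr
  have hp : ∀ i, 1 ≤ (k i - r₁) / (r₂ - r₁) := fun i ↦
    (one_le_div hd).mpr (sub_le_sub_right (hk i) r₁)
  have hanti : Antitone fun x : ℝ ↦ Real.exp (-((r₂ - r₁) * x)) := fun x y hxy ↦
    Real.exp_le_exp.mpr (neg_le_neg (mul_le_mul_of_nonneg_left hxy hd.le))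
  have hpow := NoMinusPlusMinusOn.of_quasiconvexOn
    (convexOn_sum_rpow_add_affine ha hp v w).quasiconvexOn
  have hcomp := hpow.comp_antitoneOn (hanti.antitoneOn univ) fun _ _ ↦ (Real.exp_pos _).le
  convert hcomp.nonneg_mul (g := fun x ↦ Real.exp (-(r₁ * x))) fun _ _ ↦ (Real.exp_pos _).le
    using 2 with x
  have hr₂ : Real.exp (-(r₁ * x)) * Real.exp (-((r₂ - r₁) * x)) = Real.exp (-(r₂ * x)) := by
    rw [← Real.exp_add]
    congr 1
    ring
  simp only [Function.comp_apply, mul_add, Finset.mul_sum, mul_left_comm (Real.exp (-(r₁ * x))),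
    exp_mul_exp_rpow_div hd.ne', hr₂, mul_comm w]

end ExponentialSum

theorem noMinusPlusMinusOn_forwardCurve_deriv {lam1 lam2 u1 u2 c : ℝ} (hlt : lam1 < lam2)
    (hle : lam2 ≤ 2 * lam1) (hu1 : 0 ≤ u1) (hu2 : 0 ≤ u2) (hc : 0 ≤ c) (w1 w2 : ℝ) :
    NoMinusPlusMinusOn (fun x : ℝ ↦ u2 * Real.exp (-(2 * lam2 * x)) +
      c * Real.exp (-((lam1 + lam2) * x)) + w2 * Real.exp (-(lam2 * x)) +
      u1 * Real.exp (-(2 * lam1 * x)) + w1 * Real.exp (-(lam1 * x))) univ := by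
  have hcoeff : ∀ i, 0 ≤ ![u2, c, u1] i := by
    intro i
    fin_cases i
    exacts [hu2, hc, hu1]
  have hrate : ∀ i, lam2 ≤ ![2 * lam2, lam1 + lam2, 2 * lam1] i := by
    intro i
    fin_cases i
    exacts [show lam2 ≤ 2 * lam2 by linarith, show lam2 ≤ lam1 + lam2 by linarith, hle]
  convert noMinusPlusMinusOn_exponentialSum hlt hcoeff hrate w2 w1 using 2 with x
  simp only [Fin.sum_univ_three, Matrix.cons_val]
  ring

theorem NoMinusPlusMinusOn.yieldCurve_deriv {l : ℝ → ℝ} (hl : NoMinusPlusMinusOn l (Ici 0))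
    (hint : ∀ x, 0 ≤ x → IntervalIntegrable l volume 0 x) :
    NoMinusPlusMinusOn (fun x ↦ (x ^ 2)⁻¹ * ∫ t in (0 : ℝ)..x, t * l t) (Ici 0) := by
  have hmul : NoMinusPlusMinusOn (fun t ↦ t * l t) (Ici 0) := hl.nonneg_mul fun _ ht ↦ ht
  have hmul_int : ∀ x, 0 ≤ x → IntervalIntegrable (fun t ↦ t * l t) volume 0 x :=
    fun x hx ↦ (hint x hx).continuousOn_mul continuousOn_id
  exact (hmul.primitive hmul_int).nonneg_mul fun x _ ↦ inv_nonneg.mpr (sq_nonneg x)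

/-- Scale-proximal (or critical) case with nonnegative correlation: the sign
pattern `(−, +, −)` is impossible for the derivatives of forward and yield curve. -/
theorem no_minus_plus_minus_prox_nonneg
    (lam1 lam2 : ℝ) (h1 : 0 < lam1) (h2 : lam1 < lam2) (h3 : lam2 ≤ 2 * lam1)
    (u1 u2 c w1 w2 : ℝ) (hu1 : 0 ≤ u1) (hu2 : 0 ≤ u2) (hc : 0 ≤ c)
    (l m : ℝ → ℝ)
    (hl : ∀ x : ℝ, l x = u2 * Real.exp (-(2 * lam2 * x)) +
        c * Real.exp (-((lam1 + lam2) * x)) + w2 * Real.exp (-(lam2 * x)) +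
        u1 * Real.exp (-(2 * lam1 * x)) + w1 * Real.exp (-(lam1 * x)))
    (hm : ∀ x : ℝ, 0 < x → m x = (x ^ 2)⁻¹ * ∫ t in (0 : ℝ)..x, t * l t) :
    ∀ q : ℝ → ℝ, (q = l ∨ q = m) →
      ¬ ∃ x1 x2 x3 : ℝ, 0 < x1 ∧ x1 < x2 ∧ x2 < x3 ∧
        q x1 < 0 ∧ 0 < q x2 ∧ q x3 < 0 := by
  have hL : NoMinusPlusMinusOn l univ := by
    rw [funext hl]
    exact noMinusPlusMinusOn_forwardCurve_deriv h2 h3 hu1 hu2 hc w1 w2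
  have hcont : Continuous l := by
    rw [funext hl]
    fun_prop
  have hM : NoMinusPlusMinusOn (fun x ↦ (x ^ 2)⁻¹ * ∫ t in (0 : ℝ)..x, t * l t) (Ici 0) :=
    (hL.mono (subset_univ _)).yieldCurve_deriv fun x _ ↦ hcont.intervalIntegrable 0 x
  rintro q (rfl | rfl) ⟨x1, x2, x3, hx1, h12, h23, hq1, hq2, hq3⟩
  · exact (hL trivial trivial trivial h12.le h23.le hq1 hq3).not_gt hq2
  · have hx2 : 0 < x2 := hx1.trans h12
    have hx3 : 0 < x3 := hx2.trans h23
    rw [hm x1 hx1] at hq1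
    rw [hm x2 hx2] at hq2
    rw [hm x3 hx3] at hq3
    exact (hM hx1.le hx2.le hx3.le h12.le h23.le hq1 hq3).not_gt hq2
end

section
/- Define g_α(x) := x⁻² ∫₀ˣ y·e^{−αy} dy for x > 0 and α ≥ 0. Let 0 < λ₁ < λ₂ and r > 0. Then there exist w₁, w₂ ∈ ℝ with w₁·w₂ < 0 such that the function m(x) := w₂·g_{λ₂}(x) + w₁·g_{λ₁}(x) satisfies m(x) > 0 for 0 < x < r, m(r) = 0, and m(x) < 0 for x > r; and there also exist w₁', w₂' ∈ ℝ with w₁'·w₂' < 0 such that m'(x) := w₂'·g_{λ₂}(x) + w₁'·g_{λ₁}(x) satisfies m'(x) < 0 for 0 < x < r, m'(r) = 0, and m'(x) > 0 for x > r. -/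
open MeasureTheory intervalIntegral

/-!
The quotient `g_{λ₂}(x) / g_{λ₁}(x)` is the average of `e^{-(λ₂ - λ₁) t}` over `[0, x]` with respect
to the weight `t e^{-λ₁ t}`. The averaged function is strictly decreasing, hence so is its running
average. With `c = g_{λ₂}(r) / g_{λ₁}(r)`, the combination `g_{λ₂} - c g_{λ₁}` therefore changes
sign from `+` to `-` exactly at `r`, and its negative changes sign the other way.
-/

open Set

theorem integral_lt_integral_of_forall_mem_Ioo_lt {f g : ℝ → ℝ} {a b : ℝ} (hab : a < b)
    (hf : IntervalIntegrable f volume a b) (hg : IntervalIntegrable g volume a b)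
    (hfg : ∀ t ∈ Ioo a b, f t < g t) : ∫ t in a..b, f t < ∫ t in a..b, g t := by
  rw [← sub_pos, ← integral_sub hg hf]
  exact intervalIntegral_pos_of_pos_on (hg.sub hf) (fun t ht ↦ sub_pos.mpr (hfg t ht)) hab

theorem add_div_add_lt_div {𝕜 : Type*} [Field 𝕜] [LinearOrder 𝕜] [IsStrictOrderedRing 𝕜]
    {p q m n c : 𝕜} (hm : 0 < m) (hn : 0 < n) (hp : c * m < p) (hq : q < c * n) :
    (p + q) / (m + n) < p / m := by
  have hc : c < p / m := (lt_div_iff₀ hm).mpr hp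
  rw [div_lt_iff₀ (add_pos hm hn), mul_add, div_mul_cancel₀ p hm.ne']
  gcongr
  exact hq.trans (mul_lt_mul_of_pos_right hc hn)

theorem strictAntiOn_integral_mul_div_integral {φ f : ℝ → ℝ} {a : ℝ}
    (hφ : StrictAntiOn φ (Ioi a)) (hf : ∀ t ∈ Ioi a, 0 < f t)
    (hf_int : ∀ x ∈ Ioi a, IntervalIntegrable f volume a x)
    (hφf_int : ∀ x ∈ Ioi a, IntervalIntegrable (fun t ↦ φ t * f t) volume a x) :
    StrictAntiOn (fun x ↦ (∫ t in a..x, φ t * f t) / ∫ t in a..x, f t) (Ioi a) := by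
  intro x hx y hy hxy
  have hf_xy : IntervalIntegrable f volume x y := (hf_int x hx).symm.trans (hf_int y hy)
  have hφf_xy : IntervalIntegrable (fun t ↦ φ t * f t) volume x y :=
    (hφf_int x hx).symm.trans (hφf_int y hy)
  have integral_before : φ x * ∫ t in a..x, f t < ∫ t in a..x, φ t * f t := by
    rw [← intervalIntegral.integral_const_mul]
    refine integral_lt_integral_of_forall_mem_Ioo_lt hx ((hf_int x hx).const_mul _)
      (hφf_int x hx) fun t ht ↦ ?_
    exact mul_lt_mul_of_pos_right (hφ ht.1 hx ht.2) (hf t ht.1)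
  have integral_after : ∫ t in x..y, φ t * f t < φ x * ∫ t in x..y, f t := by
    rw [← intervalIntegral.integral_const_mul]
    refine integral_lt_integral_of_forall_mem_Ioo_lt hxy hφf_xy (hf_xy.const_mul _) fun t ht ↦ ?_
    have hat : a < t := hx.trans ht.1
    exact mul_lt_mul_of_pos_right (hφ hx hat ht.1) (hf t hat)
  have weight_before : 0 < ∫ t in a..x, f t :=
    intervalIntegral_pos_of_pos_on (hf_int x hx) (fun t ht ↦ hf t ht.1) hx
  have weight_after : 0 < ∫ t in x..y, f t :=
    intervalIntegral_pos_of_pos_on hf_xy (fun t ht ↦ hf t (hx.trans ht.1)) hxy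
  beta_reduce
  rw [← integral_add_adjacent_intervals (hφf_int x hx) hφf_xy,
    ← integral_add_adjacent_intervals (hf_int x hx) hf_xy]
  exact add_div_add_lt_div weight_before weight_after integral_before integral_after

section SignChange

variable {ι 𝕜 : Type*} [LinearOrder ι] [Field 𝕜] [LinearOrder 𝕜] [IsStrictOrderedRing 𝕜]
  {s : Set ι} {u v : ι → 𝕜} {r x : ι}

theorem sub_div_mul_pos_iff_of_strictAntiOn_div (huv : StrictAntiOn (fun x ↦ u x / v x) s)
    (hr : r ∈ s) (hx : x ∈ s) (hv : 0 < v x) : 0 < u x - u r / v r * v x ↔ x < r := by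
  rw [sub_pos, ← lt_div_iff₀ hv]
  exact huv.lt_iff_gt hr hx

theorem sub_div_mul_neg_iff_of_strictAntiOn_div (huv : StrictAntiOn (fun x ↦ u x / v x) s)
    (hr : r ∈ s) (hx : x ∈ s) (hv : 0 < v x) : u x - u r / v r * v x < 0 ↔ r < x := by
  rw [sub_neg, ← div_lt_iff₀ hv]
  exact huv.lt_iff_gt hx hr

end SignChange

/-- The function `g_α(x) = x⁻² ∫₀ˣ t e^{-α t} dt`, out of which the derivative of the yield curve is
built. It takes the junk value `0` at `x = 0`, where the limit is `1 / 2`. -/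
noncomputable def slopeKernel (α x : ℝ) : ℝ :=
  (x ^ 2)⁻¹ * ∫ t in (0 : ℝ)..x, t * Real.exp (-(α * t))

theorem intervalIntegrable_mul_exp_neg_mul (α a b : ℝ) :
    IntervalIntegrable (fun t ↦ t * Real.exp (-(α * t))) volume a b :=
  Continuous.intervalIntegrable (by fun_prop) a b

theorem slopeKernel_pos (α : ℝ) {x : ℝ} (hx : 0 < x) : 0 < slopeKernel α x := by
  have integral_pos : 0 < ∫ t in (0 : ℝ)..x, t * Real.exp (-(α * t)) :=
    intervalIntegral_pos_of_pos_on (intervalIntegrable_mul_exp_neg_mul α 0 x)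
      (fun t ht ↦ mul_pos ht.1 (Real.exp_pos _)) hx
  unfold slopeKernel
  positivity

theorem exp_neg_sub_mul_mul_mul_exp (α β t : ℝ) :
    Real.exp (-((β - α) * t)) * (t * Real.exp (-(α * t))) = t * Real.exp (-(β * t)) := by
  rw [mul_left_comm, ← Real.exp_add]
  ring_nf

theorem slopeKernel_div_slopeKernel (α β : ℝ) {x : ℝ} (hx : x ≠ 0) :
    slopeKernel β x / slopeKernel α x =
      (∫ t in (0 : ℝ)..x, Real.exp (-((β - α) * t)) * (t * Real.exp (-(α * t)))) /
        ∫ t in (0 : ℝ)..x, t * Real.exp (-(α * t)) := by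
  simp only [slopeKernel, exp_neg_sub_mul_mul_mul_exp]
  exact mul_div_mul_left _ _ (inv_ne_zero (pow_ne_zero 2 hx))

theorem strictAntiOn_slopeKernel_div_slopeKernel {α β : ℝ} (hαβ : α < β) :
    StrictAntiOn (fun x ↦ slopeKernel β x / slopeKernel α x) (Ioi 0) := by
  have exp_strictAnti : StrictAnti fun t ↦ Real.exp (-((β - α) * t)) := fun s t hst ↦
    Real.exp_lt_exp.mpr (neg_lt_neg (mul_lt_mul_of_pos_left hst (sub_pos.mpr hαβ)))
  refine (strictAntiOn_integral_mul_div_integral (exp_strictAnti.strictAntiOn _)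
    (fun t ht ↦ mul_pos ht (Real.exp_pos _))
    (fun x _ ↦ intervalIntegrable_mul_exp_neg_mul α 0 x) fun x _ ↦ ?_).congr
    fun x hx ↦ (slopeKernel_div_slopeKernel α β (ne_of_gt hx)).symm
  simpa only [exp_neg_sub_mul_mul_mul_exp] using intervalIntegrable_mul_exp_neg_mul β 0 x

theorem humped_dipped_yield_attainable_general {α β r : ℝ} (hαβ : α < β) (hr : 0 < r) :
    (∃ w₁ w₂ : ℝ, w₁ * w₂ < 0 ∧
      (∀ x : ℝ, 0 < x → x < r → 0 < w₂ * slopeKernel β x + w₁ * slopeKernel α x) ∧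
      (w₂ * slopeKernel β r + w₁ * slopeKernel α r = 0) ∧
      (∀ x : ℝ, r < x → w₂ * slopeKernel β x + w₁ * slopeKernel α x < 0)) ∧
    (∃ w₁ w₂ : ℝ, w₁ * w₂ < 0 ∧
      (∀ x : ℝ, 0 < x → x < r → w₂ * slopeKernel β x + w₁ * slopeKernel α x < 0) ∧
      (w₂ * slopeKernel β r + w₁ * slopeKernel α r = 0) ∧
      (∀ x : ℝ, r < x → 0 < w₂ * slopeKernel β x + w₁ * slopeKernel α x)) := by
  have ratio_anti := strictAntiOn_slopeKernel_div_slopeKernel hαβ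
  have pos_before {x : ℝ} (hx : 0 < x) (hxr : x < r) :=
    (sub_div_mul_pos_iff_of_strictAntiOn_div ratio_anti hr hx (slopeKernel_pos α hx)).mpr hxr
  have neg_after {x : ℝ} (hrx : r < x) :=
    (sub_div_mul_neg_iff_of_strictAntiOn_div ratio_anti hr (hr.trans hrx)
      (slopeKernel_pos α (hr.trans hrx))).mpr hrx
  have zero_at : slopeKernel β r / slopeKernel α r * slopeKernel α r = slopeKernel β r :=
    div_mul_cancel₀ _ (slopeKernel_pos α hr).ne'
  have ratio_pos : 0 < slopeKernel β r / slopeKernel α r :=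
    div_pos (slopeKernel_pos β hr) (slopeKernel_pos α hr)
  set c := slopeKernel β r / slopeKernel α r
  refine ⟨⟨-c, 1, by linarith, fun x hx hxr ↦ ?_, by linarith, fun x hrx ↦ ?_⟩,
    ⟨c, -1, by linarith, fun x hx hxr ↦ ?_, by linarith, fun x hrx ↦ ?_⟩⟩
  · linarith [pos_before hx hxr]
  · linarith [neg_after hrx]
  · linarith [pos_before hx hxr]
  · linarith [neg_after hrx]

/-- Humped and dipped yield curves are strongly attainable: for any `0 < λ₁ < λ₂`
and any prescribed `r > 0`, suitable combinations `w₂ g_{λ₂} + w₁ g_{λ₁}` with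
`w₁ w₂ < 0` change sign exactly at `r`, in either direction, where
`g_α(x) = x⁻² ∫₀ˣ y e^{−αy} dy`. -/
theorem humped_dipped_yield_attainable (lam1 lam2 r : ℝ)
    (h1 : 0 < lam1) (h2 : lam1 < lam2) (hr : 0 < r)
    (g : ℝ → ℝ → ℝ)
    (hg : ∀ α x : ℝ, g α x = (x ^ 2)⁻¹ * ∫ t in (0 : ℝ)..x, t * Real.exp (-(α * t))) :
    (∃ w1 w2 : ℝ, w1 * w2 < 0 ∧
      (∀ x : ℝ, 0 < x → x < r → 0 < w2 * g lam2 x + w1 * g lam1 x) ∧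
      (w2 * g lam2 r + w1 * g lam1 r = 0) ∧
      (∀ x : ℝ, r < x → w2 * g lam2 x + w1 * g lam1 x < 0)) ∧
    (∃ w1' w2' : ℝ, w1' * w2' < 0 ∧
      (∀ x : ℝ, 0 < x → x < r → w2' * g lam2 x + w1' * g lam1 x < 0) ∧
      (w2' * g lam2 r + w1' * g lam1 r = 0) ∧
      (∀ x : ℝ, r < x → 0 < w2' * g lam2 x + w1' * g lam1 x)) := by
  obtain rfl : g = slopeKernel := funext₂ hg
  exact humped_dipped_yield_attainable_general h2 hr
end

section
/- Let 0 < λ₁ < λ₂ and 0 < r₁ < r₂. Then there exist u₂ > 0 and w₁, w₂ ∈ ℝ such that the function l(x) := u₂·e^{−2λ₂x} + w₂·e^{−λ₂x} + w₁·e^{−λ₁x} satisfies: l(x) > 0 for 0 ≤ x < r₁, l(r₁) = 0, l(x) < 0 for r₁ < x < r₂, l(r₂) = 0, and l(x) > 0 for x > r₂. -/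
/-!
Factoring out the middle exponential `exp (b * x)` turns a combination of exponentials with
exponents `a < b < c` into `u * exp ((a - b) * x) + v + w * exp ((c - b) * x)`. When `u` and `w` are
positive this is strictly convex, so it has the sign pattern `(+, -, +)` as soon as it vanishes at
the two prescribed points. Since the first exponential decreases and the second increases,
positive weights `u` and `w` can be chosen to equalize its values at these points, and then the
constant `v` makes both values zero.
-/

/-- The sign pattern `(+, -, +)` with zeros exactly at `r` and `s`: the signs of the derivative of a
curve with a hump (local maximum) at `r` and a dip (local minimum) at `s`. -/
structure HasHumpDipSigns {α β : Type*} [LT α] [LT β] [Zero β] (l : α → β) (r s : α) : Prop where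
  pos_of_lt_left : ∀ x, x < r → 0 < l x
  left_eq_zero : l r = 0
  neg_of_between : ∀ x, r < x → x < s → l x < 0
  right_eq_zero : l s = 0
  pos_of_right_lt : ∀ x, s < x → 0 < l x

lemma strictConvexOn_const_smul {𝕜 E β : Type*} [CommSemiring 𝕜] [PartialOrder 𝕜]
    [AddCommMonoid E] [SMul 𝕜 E] [AddCommMonoid β] [PartialOrder β] [Module 𝕜 β]
    [PosSMulStrictMono 𝕜 β] {s : Set E} {f : E → β} (hf : StrictConvexOn 𝕜 s f) {c : 𝕜}
    (hc : 0 < c) : StrictConvexOn 𝕜 s (fun x => c • f x) := by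
  refine ⟨hf.1, fun x hx y hy hxy a b ha hb hab => ?_⟩
  calc c • f (a • x + b • y) < c • (a • f x + b • f y) :=
        smul_lt_smul_of_pos_left (hf.2 hx hy hxy ha hb hab) hc
    _ = a • c • f x + b • c • f y := by rw [smul_add, smul_comm c, smul_comm c]

lemma strictConvexOn_comp_linearMap {𝕜 E F β : Type*} [Semiring 𝕜] [PartialOrder 𝕜]
    [AddCommMonoid E] [Module 𝕜 E] [AddCommMonoid F] [Module 𝕜 F] [AddCommMonoid β]
    [PartialOrder β] [SMul 𝕜 β] {s : Set F} {f : F → β} (hf : StrictConvexOn 𝕜 s f)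
    {g : E →ₗ[𝕜] F} (hg : Function.Injective g) : StrictConvexOn 𝕜 (g ⁻¹' s) (f ∘ g) := by
  refine ⟨hf.1.linear_preimage g, fun x hx y hy hxy a b ha hb hab => ?_⟩
  simpa only [Function.comp_apply, map_add, map_smul] using hf.2 hx hy (hg.ne hxy) ha hb hab

lemma strictConvexOn_exp_const_mul {k : ℝ} (hk : k ≠ 0) :
    StrictConvexOn ℝ Set.univ (fun x => Real.exp (k * x)) :=
  strictConvexOn_comp_linearMap strictConvexOn_exp (g := LinearMap.mulLeft ℝ k)
    (mul_right_injective₀ hk)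

namespace HasHumpDipSigns

lemma pos_mul {α R : Type*} [LT α] [MulZeroClass R] [Preorder R] [PosMulStrictMono R]
    {l p : α → R} {r s : α} (hl : HasHumpDipSigns l r s) (hp : ∀ x, 0 < p x) :
    HasHumpDipSigns (fun x => p x * l x) r s where
  pos_of_lt_left x hx := mul_pos (hp x) (hl.pos_of_lt_left x hx)
  left_eq_zero := by rw [hl.left_eq_zero, mul_zero]
  neg_of_between x hrx hxs := mul_neg_of_pos_of_neg (hp x) (hl.neg_of_between x hrx hxs)
  right_eq_zero := by rw [hl.right_eq_zero, mul_zero]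
  pos_of_right_lt x hx := mul_pos (hp x) (hl.pos_of_right_lt x hx)

variable {𝕜 : Type*} [Field 𝕜] [LinearOrder 𝕜] [IsStrictOrderedRing 𝕜]

lemma of_strictConvexOn {β : Type*} [AddCommMonoid β] [LinearOrder β] [IsOrderedAddMonoid β]
    [Module 𝕜 β] [PosSMulStrictMono 𝕜 β] {f : 𝕜 → β} (hf : StrictConvexOn 𝕜 Set.univ f) {r s : 𝕜}
    (hrs : r < s) (hr : f r = 0) (hs : f s = 0) : HasHumpDipSigns f r s := by
  have lt_max {x y z : 𝕜} (hxy : x < y) (hyz : y < z) : f y < max (f x) (f z) :=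
    hf.lt_on_openSegment trivial trivial (hxy.trans hyz).ne
      (by rw [openSegment_eq_Ioo (hxy.trans hyz)]; exact ⟨hxy, hyz⟩)
  refine ⟨fun x hx => ?_, hr, fun x hrx hxs => ?_, hs, fun x hx => ?_⟩
  · simpa [hr, hs] using lt_max hx hrs
  · simpa [hr, hs] using lt_max hrx hxs
  · simpa [hr, hs] using lt_max hrs hx

lemma exists_of_strictAnti_of_strictMono {f g : 𝕜 → 𝕜} (hf : StrictConvexOn 𝕜 Set.univ f)
    (hg : StrictConvexOn 𝕜 Set.univ g) (hf_anti : StrictAnti f) (hg_mono : StrictMono g)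
    {r s : 𝕜} (hrs : r < s) :
    ∃ u v w : 𝕜, 0 < u ∧ 0 < w ∧ HasHumpDipSigns (fun x => u * f x + v + w * g x) r s := by
  have hu : 0 < g s - g r := sub_pos.mpr (hg_mono hrs)
  have hw : 0 < f r - f s := sub_pos.mpr (hf_anti hrs)
  refine ⟨g s - g r, f s * g r - f r * g s, f r - f s, hu, hw,
    of_strictConvexOn ?_ hrs (by ring) (by ring)⟩
  exact ((strictConvexOn_const_smul hf hu).add_const _).add (strictConvexOn_const_smul hg hw)

end HasHumpDipSigns

theorem HD_strongly_attainable_general {a b c r s : ℝ} (hab : a < b) (hbc : b < c) (hrs : r < s) :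
    ∃ u v w : ℝ, 0 < u ∧ 0 < w ∧ HasHumpDipSigns
      (fun x => u * Real.exp (a * x) + v * Real.exp (b * x) + w * Real.exp (c * x)) r s := by
  have hab' : a - b < 0 := sub_neg.mpr hab
  have hbc' : 0 < c - b := sub_pos.mpr hbc
  obtain ⟨u, v, w, hu, hw, h⟩ := HasHumpDipSigns.exists_of_strictAnti_of_strictMono
    (strictConvexOn_exp_const_mul hab'.ne) (strictConvexOn_exp_const_mul hbc'.ne')
    (Real.exp_strictMono.comp_strictAnti (strictAnti_mul_left hab'))
    (Real.exp_strictMono.comp (strictMono_mul_left_of_pos hbc')) hrs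
  refine ⟨u, v, w, hu, hw, ?_⟩
  have exp_factor (k x : ℝ) : Real.exp (k * x) = Real.exp (b * x) * Real.exp ((k - b) * x) := by
    rw [← Real.exp_add, ← add_mul, add_sub_cancel]
  have factorization :
      (fun x => u * Real.exp (a * x) + v * Real.exp (b * x) + w * Real.exp (c * x)) =
        fun x => Real.exp (b * x) *
          (u * Real.exp ((a - b) * x) + v + w * Real.exp ((c - b) * x)) := by
    funext x
    rw [exp_factor a, exp_factor c]
    ring
  rw [factorization]
  exact h.pos_mul fun x => Real.exp_pos (b * x)

/-- The hump-dip shape `HD` is strongly attainable: for any `0 < λ₁ < λ₂` and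
prescribed `0 < r₁ < r₂` there are `u₂ > 0` and `w₁, w₂ ∈ ℝ` such that
`l(x) = u₂ e^{−2λ₂x} + w₂ e^{−λ₂x} + w₁ e^{−λ₁x}` has sign pattern `(+, −, +)`
with zeros exactly at `r₁, r₂`. -/
theorem HD_strongly_attainable (lam1 lam2 r1 r2 : ℝ)
    (h1 : 0 < lam1) (h2 : lam1 < lam2) (hr1 : 0 < r1) (hr12 : r1 < r2) :
    ∃ u2 w1 w2 : ℝ, 0 < u2 ∧
      (∀ x : ℝ, 0 ≤ x → x < r1 →
        0 < u2 * Real.exp (-(2 * lam2 * x)) + w2 * Real.exp (-(lam2 * x)) +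
          w1 * Real.exp (-(lam1 * x))) ∧
      (u2 * Real.exp (-(2 * lam2 * r1)) + w2 * Real.exp (-(lam2 * r1)) +
        w1 * Real.exp (-(lam1 * r1)) = 0) ∧
      (∀ x : ℝ, r1 < x → x < r2 →
        u2 * Real.exp (-(2 * lam2 * x)) + w2 * Real.exp (-(lam2 * x)) +
          w1 * Real.exp (-(lam1 * x)) < 0) ∧
      (u2 * Real.exp (-(2 * lam2 * r2)) + w2 * Real.exp (-(lam2 * r2)) +
        w1 * Real.exp (-(lam1 * r2)) = 0) ∧
      (∀ x : ℝ, r2 < x →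
        0 < u2 * Real.exp (-(2 * lam2 * x)) + w2 * Real.exp (-(lam2 * x)) +
          w1 * Real.exp (-(lam1 * x))) := by
  obtain ⟨u, v, w, hu, -, h⟩ := HD_strongly_attainable_general
    (show -(2 * lam2) < -lam2 by linarith) (neg_lt_neg h2) hr12
  simp only [neg_mul] at h
  exact ⟨u, w, v, hu, fun x _ => h.pos_of_lt_left x, h.left_eq_zero, h.neg_of_between,
    h.right_eq_zero, h.pos_of_right_lt⟩
end
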